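/- Let A_Γ be an Artin group whose defining graph Γ is triangle-free with all edge labels ≥ 3, Γ is connected with at least 3 vertices, Γ has no separating vertices and no separating edges, and every label-preserving graph automorphism of Γ fixing some vertex and each of its neighbors is the identity. Let N ≤ Aut(A_Γ) be the subgroup generated by the global inversion (the automorphism sending each standard generator to its inverse) together with the automorphisms induced by label-preserving graph automorphisms of Γ. Then every bijective isometry f of (A_Γ, d) can be written uniquely as f(x) = g·ψ(x) for some g ∈ A_Γ and ψ ∈ N; consequently Isom(A_Γ, d) is isomorphic to the semidirect product A_Γ ⋊ N. -/

import Mathlib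

/-- The alternating product `x y x y ⋯` with `n` factors. -/
def altProd {G : Type*} [Monoid G] : ℕ → G → G → G
  | 0, _, _ => 1
  | n + 1, x, y => x * altProd n y x

/-- A simple graph with each edge labeled by an integer `≥ 2`. -/
structure LabeledGraph (V : Type*) where
  graph : SimpleGraph V
  label : V → V → ℕ
  label_symm : ∀ a b, label a b = label b a
  two_le_label : ∀ ⦃a b⦄, graph.Adj a b → 2 ≤ label a b

namespace LabeledGraph

variable {V : Type*} (Γ : LabeledGraph V)

/-- The Artin relations `prod(a,b;m) = prod(b,a;m)` associated to a labeled graph,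
as elements of the free group on the vertices. -/
def artinRels : Set (FreeGroup V) :=
  { r | ∃ a b, Γ.graph.Adj a b ∧
      r = altProd (Γ.label a b) (FreeGroup.of a) (FreeGroup.of b) *
          (altProd (Γ.label a b) (FreeGroup.of b) (FreeGroup.of a))⁻¹ }

end LabeledGraph

/-- The Artin group with defining labeled graph `Γ`. -/
abbrev ArtinGroup {V : Type*} (Γ : LabeledGraph V) :=
  PresentedGroup Γ.artinRels

/-- The standard generator of the Artin group corresponding to a vertex. -/
def artinGen {V : Type*} (Γ : LabeledGraph V) (v : V) : ArtinGroup Γ :=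
  PresentedGroup.of v

/-- Word length of a group element with respect to a set `S` of generators
(words may use generators and their inverses). -/
noncomputable def wordLength {G : Type*} [Group G] (S : Set G) (g : G) : ℕ :=
  sInf { n | ∃ l : List G, l.length = n ∧ (∀ x ∈ l, x ∈ S ∨ x⁻¹ ∈ S) ∧ l.prod = g }

/-- Word metric with respect to a generating set `S`. -/
noncomputable def wordDist {G : Type*} [Group G] (S : Set G) (g h : G) : ℝ :=
  (wordLength S (g⁻¹ * h) : ℝ)

/-- The word metric on an Artin group with respect to the standard generators. -/
noncomputable def artinDist {V : Type*} (Γ : LabeledGraph V) :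
    ArtinGroup Γ → ArtinGroup Γ → ℝ :=
  wordDist (Set.range (artinGen Γ))

/-- `(L,A)`-quasi-isometric embedding between spaces with distance functions. -/
def IsQIEmbedding {X Y : Type*} (L A : ℝ) (dX : X → X → ℝ) (dY : Y → Y → ℝ)
    (q : X → Y) : Prop :=
  ∀ x x', dX x x' / L - A ≤ dY (q x) (q x') ∧ dY (q x) (q x') ≤ L * dX x x' + A

/-- `(L,A)`-quasi-isometry: an `(L,A)`-quasi-isometric embedding with `A`-dense image. -/
def IsQuasiIsometry {X Y : Type*} (L A : ℝ) (dX : X → X → ℝ) (dY : Y → Y → ℝ)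
    (q : X → Y) : Prop :=
  IsQIEmbedding L A dX dY q ∧ ∀ y : Y, ∃ x : X, dY (q x) y ≤ A

/-- CLTTF: connected with at least three vertices, large type, triangle free. -/
def LabeledGraph.CLTTF {V : Type*} (Γ : LabeledGraph V) : Prop :=
  Γ.graph.Connected ∧ 3 ≤ Nat.card V ∧
    (∀ ⦃a b⦄, Γ.graph.Adj a b → 3 ≤ Γ.label a b) ∧ Γ.graph.CliqueFree 3

/-- A decomposition of `Γ` as a union of two full subgraphs (given by vertex sets
`S₁`, `S₂`, each different from `T`) intersecting along `T`. -/
def LabeledGraph.IsSepDecomp {V : Type*} (Γ : LabeledGraph V) (S₁ S₂ T : Set V) : Prop :=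
  S₁ ∪ S₂ = Set.univ ∧ S₁ ∩ S₂ = T ∧ S₁ ≠ T ∧ S₂ ≠ T ∧
    ∀ ⦃a b⦄, Γ.graph.Adj a b → (a ∈ S₁ ∧ b ∈ S₁) ∨ (a ∈ S₂ ∧ b ∈ S₂)

/-- `Γ` has a separating vertex or a separating edge. -/
def LabeledGraph.HasSeparatingVertexOrEdge {V : Type*} (Γ : LabeledGraph V) : Prop :=
  (∃ v : V, ∃ S₁ S₂ : Set V, Γ.IsSepDecomp S₁ S₂ {v}) ∨
    ∃ a b : V, Γ.graph.Adj a b ∧ ∃ S₁ S₂ : Set V, Γ.IsSepDecomp S₁ S₂ {a, b}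

/-- An isomorphism of labeled graphs: a graph isomorphism preserving edge labels. -/
structure LabeledGraphIso {V V' : Type*} (Γ : LabeledGraph V) (Γ' : LabeledGraph V') where
  toEquiv : V ≃ V'
  adj_iff : ∀ a b, Γ'.graph.Adj (toEquiv a) (toEquiv b) ↔ Γ.graph.Adj a b
  label_eq : ∀ ⦃a b⦄, Γ.graph.Adj a b → Γ'.label (toEquiv a) (toEquiv b) = Γ.label a b

/-- `f` is an isometry for the distance function `d`. -/
def IsIsometryOf {X : Type*} (d : X → X → ℝ) (f : X → X) : Prop :=
  ∀ x y, d (f x) (f y) = d x y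

/-- The left coset `g•H` as a set. -/
def leftCosetSet {G : Type*} [Group G] (g : G) (H : Subgroup G) : Set G :=
  (fun x => g * x) '' (H : Set G)

/-- The standard subgroup generated by the two endpoints of an edge. -/
def edgeSubgroup {V : Type*} (Γ : LabeledGraph V) (a b : V) : Subgroup (ArtinGroup Γ) :=
  Subgroup.closure {artinGen Γ a, artinGen Γ b}

/-- The standard subgroup generated by a set of vertices. -/
def standardSubgroup {V : Type*} (Γ : LabeledGraph V) (S : Set V) :
    Subgroup (ArtinGroup Γ) :=
  Subgroup.closure (artinGen Γ '' S)

/-- The element `Δ_e = prod(a,b;m)` associated to an edge `e = {a,b}` of label `m`. -/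
def artinDelta {V : Type*} (Γ : LabeledGraph V) (a b : V) : ArtinGroup Γ :=
  altProd (Γ.label a b) (artinGen Γ a) (artinGen Γ b)

/-- A leaf of a graph: a vertex with a unique neighbour. -/
def LabeledGraph.IsLeaf {V : Type*} (Γ : LabeledGraph V) (a : V) : Prop :=
  ∃! b, Γ.graph.Adj a b

/-- A stable vertex: not a leaf, or a leaf whose unique incident edge has odd label
and whose other endpoint is not a leaf. -/
def LabeledGraph.StableVertex {V : Type*} (Γ : LabeledGraph V) (a : V) : Prop :=
  ¬ Γ.IsLeaf a ∨
    (Γ.IsLeaf a ∧ ∃ b, Γ.graph.Adj a b ∧ Odd (Γ.label a b) ∧ ¬ Γ.IsLeaf b)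

/-- Stable cosets: left cosets of cyclic subgroups `⟨Δ_e⟩` for an edge `e`, or `⟨a⟩`
for a stable vertex `a`. -/
def StableCoset {V : Type*} (Γ : LabeledGraph V) (C : Set (ArtinGroup Γ)) : Prop :=
  (∃ (g : ArtinGroup Γ) (a b : V), Γ.graph.Adj a b ∧
      C = leftCosetSet g (Subgroup.zpowers (artinDelta Γ a b))) ∨
    ∃ (g : ArtinGroup Γ) (a : V), Γ.StableVertex a ∧
      C = leftCosetSet g (Subgroup.zpowers (artinGen Γ a))

/-- The Hausdorff distance between `A` and `B` (w.r.t. the distance function `d`)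
is less than `D`. -/
def HausdorffClose {X : Type*} (d : X → X → ℝ) (D : ℝ) (A B : Set X) : Prop :=
  (∀ a ∈ A, ∃ b ∈ B, d a b < D) ∧ ∀ b ∈ B, ∃ a ∈ A, d a b < D

/-- Two subsets are parallel if they are at finite Hausdorff distance. -/
def CoarseParallel {X : Type*} (d : X → X → ℝ) (A B : Set X) : Prop :=
  ∃ D : ℝ, HausdorffClose d D A B

/-- A `2`-dimensional Artin group: every triangle with labels `p, q, r` satisfies
`1/p + 1/q + 1/r ≤ 1`. -/
def LabeledGraph.TwoDimensional {V : Type*} (Γ : LabeledGraph V) : Prop :=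
  ∀ a b c : V, Γ.graph.Adj a b → Γ.graph.Adj b c → Γ.graph.Adj a c →
    (1 / (Γ.label a b : ℚ)) + 1 / (Γ.label b c : ℚ) + 1 / (Γ.label a c : ℚ) ≤ 1

/-- The global inversion: the automorphism sending each standard generator to its
inverse. -/
def IsGlobalInversion {V : Type*} (Γ : LabeledGraph V)
    (ψ : MulAut (ArtinGroup Γ)) : Prop :=
  ∀ v : V, ψ (artinGen Γ v) = (artinGen Γ v)⁻¹

/-- An automorphism induced by a label-preserving graph automorphism of `Γ`. -/
def IsGraphInduced {V : Type*} (Γ : LabeledGraph V)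
    (ψ : MulAut (ArtinGroup Γ)) : Prop :=
  ∃ α : LabeledGraphIso Γ Γ, ∀ v : V, ψ (artinGen Γ v) = artinGen Γ (α.toEquiv v)

/-- The subgroup `N ≤ Aut(A_Γ)` generated by the global inversion and the
automorphisms induced by label-preserving graph automorphisms of `Γ`. -/
def specialAutGroup {V : Type*} (Γ : LabeledGraph V) :
    Subgroup (MulAut (ArtinGroup Γ)) :=
  Subgroup.closure { ψ | IsGlobalInversion Γ ψ ∨ IsGraphInduced Γ ψ }

section WordLength

variable {V : Type*} (Γ : LabeledGraph V)

theorem map_altProd {G H : Type*} [Monoid G] [Monoid H] (f : G →* H) (n : ℕ) (x y : G) :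
    f (altProd n x y) = altProd n (f x) (f y) := by
  induction n generalizing x y with
  | zero => simp [altProd]
  | succ n ih => simp [altProd, ih]

/-- The homomorphism out of an Artin group determined by the images of the generators. -/
def artinLift {G : Type*} [Group G] (f : V → G)
    (hf : ∀ a b, Γ.graph.Adj a b →
      altProd (Γ.label a b) (f a) (f b) = altProd (Γ.label a b) (f b) (f a)) :
    ArtinGroup Γ →* G :=
  PresentedGroup.toGroup (f := f) (by
    rintro r ⟨a, b, hab, rfl⟩
    simp [map_altProd, hf a b hab])

@[simp]
theorem artinLift_gen {G : Type*} [Group G] (f : V → G)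
    (hf : ∀ a b, Γ.graph.Adj a b →
      altProd (Γ.label a b) (f a) (f b) = altProd (Γ.label a b) (f b) (f a)) (v : V) :
    artinLift Γ f hf (artinGen Γ v) = f v := by
  simp [artinLift, artinGen]

theorem artin_hom_ext {G : Type*} [Group G] {f g : ArtinGroup Γ →* G}
    (h : ∀ v, f (artinGen Γ v) = g (artinGen Γ v)) : f = g :=
  PresentedGroup.ext h

theorem artin_relation {a b : V} (h : Γ.graph.Adj a b) :
    altProd (Γ.label a b) (artinGen Γ a) (artinGen Γ b) =
      altProd (Γ.label a b) (artinGen Γ b) (artinGen Γ a) := by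
  have h1 : PresentedGroup.mk Γ.artinRels
      (altProd (Γ.label a b) (FreeGroup.of a) (FreeGroup.of b) *
          (altProd (Γ.label a b) (FreeGroup.of b) (FreeGroup.of a))⁻¹) = 1 :=
    PresentedGroup.one_of_mem ⟨a, b, h, rfl⟩
  rw [map_mul, map_inv, mul_inv_eq_one, map_altProd, map_altProd] at h1
  exact h1

/-- The group element of a letter: a vertex with a sign. -/
def artinLetter (x : V × Bool) : ArtinGroup Γ :=
  if x.2 then artinGen Γ x.1 else (artinGen Γ x.1)⁻¹

@[simp]
theorem artinLetter_true (v : V) : artinLetter Γ (v, true) = artinGen Γ v := rfl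

@[simp]
theorem artinLetter_false (v : V) : artinLetter Γ (v, false) = (artinGen Γ v)⁻¹ := rfl

theorem artinLetter_not (x : V × Bool) : artinLetter Γ (x.1, !x.2) = (artinLetter Γ x)⁻¹ := by
  rcases x with ⟨v, _ | _⟩ <;> simp

/-- Word length with respect to the standard generators. -/
noncomputable def artinLen (g : ArtinGroup Γ) : ℕ := wordLength (Set.range (artinGen Γ)) g

theorem artinDist_eq (g h : ArtinGroup Γ) : artinDist Γ g h = artinLen Γ (g⁻¹ * h) := rfl

theorem artinLen_prod_le (L : List (V × Bool)) :
    artinLen Γ (L.map (artinLetter Γ)).prod ≤ L.length := by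
  apply Nat.sInf_le
  refine ⟨_, by simp, ?_, rfl⟩
  intro x hx
  obtain ⟨⟨v, b⟩, -, rfl⟩ := List.mem_map.1 hx
  cases b <;> simp

theorem artin_induction {p : ArtinGroup Γ → Prop} (one : p 1)
    (mul : ∀ x g, p g → p (artinLetter Γ x * g)) (g : ArtinGroup Γ) : p g := by
  have key : ∀ L : List (V × Bool), p (L.map (artinLetter Γ)).prod := by
    intro L
    induction L with
    | nil => simpa using one
    | cons x L ih => simpa using mul x _ ih
  classical
  obtain ⟨w, rfl⟩ := PresentedGroup.mk_surjective Γ.artinRels g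
  rw [← FreeGroup.mk_toWord (x := w)]
  convert key w.toWord using 1
  induction w.toWord with
  | nil => simp [← FreeGroup.one_eq_mk]
  | cons x L ih =>
    rw [List.map_cons, List.prod_cons, ← ih, ← List.singleton_append, ← FreeGroup.mul_mk, map_mul]
    congr 1
    rcases x with ⟨v, _ | _⟩
    · have : FreeGroup.mk [(v, false)] = (FreeGroup.of v)⁻¹ := rfl
      rw [this, map_inv]; rfl
    · rfl

theorem exists_word (g : ArtinGroup Γ) :
    ∃ L : List (V × Bool), L.length = artinLen Γ g ∧ (L.map (artinLetter Γ)).prod = g := by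
  have hne : { n | ∃ l : List (ArtinGroup Γ), l.length = n ∧
      (∀ x ∈ l, x ∈ Set.range (artinGen Γ) ∨ x⁻¹ ∈ Set.range (artinGen Γ)) ∧
        l.prod = g }.Nonempty := by
    induction g using artin_induction with
    | one => exact ⟨0, [], by simp⟩
    | mul x g ih =>
      obtain ⟨n, l, -, hl, hp⟩ := ih
      refine ⟨_, artinLetter Γ x :: l, rfl, ?_, by simp [hp]⟩
      intro y hy
      rcases List.mem_cons.1 hy with rfl | hy
      · rcases x with ⟨v, _ | _⟩ <;> simp
      · exact hl y hy
  obtain ⟨l, hl, hmem, hp⟩ := Nat.sInf_mem hne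
  change l.length = artinLen Γ g at hl
  rw [← hl, ← hp]
  clear hl hp hne
  induction l with
  | nil => exact ⟨[], by simp⟩
  | cons y l ih =>
    obtain ⟨L, h1, h2⟩ := ih fun x hx => hmem x (List.mem_cons_of_mem _ hx)
    rcases hmem y List.mem_cons_self with ⟨v, hv⟩ | ⟨v, hv⟩
    · exact ⟨(v, true) :: L, by simp [h1], by simp [h2, hv]⟩
    · exact ⟨(v, false) :: L, by simp [h1], by simp [h2, hv]⟩

@[simp]
theorem artinLen_one : artinLen Γ 1 = 0 := by
  simpa using artinLen_prod_le Γ []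

theorem artinLen_mul_le (g h : ArtinGroup Γ) :
    artinLen Γ (g * h) ≤ artinLen Γ g + artinLen Γ h := by
  obtain ⟨L, h1, h2⟩ := exists_word Γ g
  obtain ⟨M, h3, h4⟩ := exists_word Γ h
  rw [← h1, ← h3, ← List.length_append, ← h2, ← h4, ← List.prod_append, ← List.map_append]
  exact artinLen_prod_le Γ _

theorem artinLen_letter_le (x : V × Bool) : artinLen Γ (artinLetter Γ x) ≤ 1 := by
  simpa using artinLen_prod_le Γ [x]

theorem artinLen_letter_mul_le (x : V × Bool) (g : ArtinGroup Γ) :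
    artinLen Γ (artinLetter Γ x * g) ≤ artinLen Γ g + 1 := by
  have := artinLen_mul_le Γ (artinLetter Γ x) g
  have := artinLen_letter_le Γ x
  omega

theorem eq_one_of_artinLen_eq_zero {g : ArtinGroup Γ} (h : artinLen Γ g = 0) : g = 1 := by
  obtain ⟨L, h1, h2⟩ := exists_word Γ g
  rw [h, List.length_eq_zero_iff] at h1
  simpa [h1] using h2.symm

/-- The letter `x` is the first letter of a geodesic word for `g`. -/
def IsFirst (x : V × Bool) (g : ArtinGroup Γ) : Prop :=
  artinLen Γ ((artinLetter Γ x)⁻¹ * g) < artinLen Γ g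

theorem IsFirst.len_eq {x : V × Bool} {g : ArtinGroup Γ} (h : IsFirst Γ x g) :
    artinLen Γ g = artinLen Γ ((artinLetter Γ x)⁻¹ * g) + 1 := by
  have := artinLen_letter_mul_le Γ x ((artinLetter Γ x)⁻¹ * g)
  rw [mul_inv_cancel_left] at this
  unfold IsFirst at h
  omega

theorem exists_isFirst {g : ArtinGroup Γ} (h : g ≠ 1) : ∃ x, IsFirst Γ x g := by
  obtain ⟨L, h1, h2⟩ := exists_word Γ g
  cases L with
  | nil => exact absurd h2.symm h
  | cons x L =>
    refine ⟨x, ?_⟩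
    unfold IsFirst
    have h3 : (artinLetter Γ x)⁻¹ * g = (L.map (artinLetter Γ)).prod := by
      rw [← h2]; simp
    have := artinLen_prod_le Γ L
    rw [h3, ← h1, List.length_cons]
    omega

theorem artinLen_unique (l : ArtinGroup Γ → ℕ) (one : l 1 = 0)
    (le : ∀ x g, l (artinLetter Γ x * g) ≤ l g + 1)
    (desc : ∀ g, l g ≠ 0 → ∃ x, l (artinLetter Γ x * g) < l g)
    (zero : ∀ g, l g = 0 → g = 1) (g : ArtinGroup Γ) : artinLen Γ g = l g := by
  apply le_antisymm
  · induction hn : l g generalizing g with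
    | zero => simp [zero g hn]
    | succ n ih =>
      obtain ⟨x, hx⟩ := desc g (by omega)
      have h1 := le (x.1, !x.2) (artinLetter Γ x * g)
      rw [artinLetter_not, inv_mul_cancel_left] at h1
      have h2 := ih _ (show l (artinLetter Γ x * g) = n by omega)
      have h3 := artinLen_letter_mul_le Γ (x.1, !x.2) (artinLetter Γ x * g)
      rw [artinLetter_not, inv_mul_cancel_left] at h3
      omega
  · obtain ⟨L, h1, rfl⟩ := exists_word Γ g
    rw [← h1]
    clear h1
    induction L with
    | nil => simp [one]
    | cons x L ih =>
      have := le x (L.map (artinLetter Γ)).prod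
      simp only [List.map_cons, List.prod_cons, List.length_cons]
      omega

/-- The exponent sum homomorphism. -/
def artinExp : ArtinGroup Γ →* Multiplicative ℤ :=
  artinLift Γ (fun _ => Multiplicative.ofAdd 1) fun _ _ _ => rfl

theorem artinExp_letter (x : V × Bool) :
    (artinExp Γ (artinLetter Γ x)).toAdd = if x.2 then 1 else -1 := by
  rcases x with ⟨v, _ | _⟩ <;> simp [artinExp]

theorem artinExp_le (g : ArtinGroup Γ) : |(artinExp Γ g).toAdd| ≤ artinLen Γ g := by
  obtain ⟨L, h1, rfl⟩ := exists_word Γ g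
  rw [← h1]
  clear h1
  induction L with
  | nil => simp
  | cons x L ih =>
    have := artinExp_letter Γ x
    simp only [List.map_cons, List.prod_cons, map_mul, toAdd_mul, this, List.length_cons]
    push_cast
    rw [abs_le] at *
    split_ifs <;> omega

theorem artinExp_parity (g : ArtinGroup Γ) :
    (artinExp Γ g).toAdd % 2 = (artinLen Γ g : ℤ) % 2 := by
  obtain ⟨L, h1, rfl⟩ := exists_word Γ g
  rw [← h1]
  clear h1
  induction L with
  | nil => simp
  | cons x L ih =>
    have := artinExp_letter Γ x
    simp only [List.map_cons, List.prod_cons, map_mul, toAdd_mul, this, List.length_cons]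
    push_cast
    split_ifs <;> omega

theorem artinLen_letter_mul_ne (x : V × Bool) (g : ArtinGroup Γ) :
    artinLen Γ (artinLetter Γ x * g) ≠ artinLen Γ g := by
  have h1 := artinExp_parity Γ (artinLetter Γ x * g)
  have h2 := artinExp_parity Γ g
  rw [map_mul, toAdd_mul, artinExp_letter] at h1
  split_ifs at h1 <;> omega

theorem not_isFirst {x : V × Bool} {g : ArtinGroup Γ} (h : ¬ IsFirst Γ x g) :
    artinLen Γ ((artinLetter Γ x)⁻¹ * g) = artinLen Γ g + 1 := by
  have h1 := artinLen_letter_mul_ne Γ (x.1, !x.2) g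
  have h2 := artinLen_letter_mul_le Γ (x.1, !x.2) g
  rw [artinLetter_not] at h1 h2
  unfold IsFirst at h
  omega

@[simp]
theorem artinLen_letter (x : V × Bool) : artinLen Γ (artinLetter Γ x) = 1 := by
  have h1 := artinLen_letter_mul_ne Γ x 1
  have h2 := artinLen_letter_le Γ x
  rw [mul_one, artinLen_one] at h1
  omega

theorem not_isFirst_one (x : V × Bool) : ¬ IsFirst Γ x 1 := by
  simp [IsFirst]

theorem isFirst_letter (x : V × Bool) : IsFirst Γ x (artinLetter Γ x) := by
  simp [IsFirst]

end WordLength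

section Inversion

variable {V : Type*} (Γ : LabeledGraph V)

theorem altProd_succ_right {G : Type*} [Monoid G] (n : ℕ) (x y : G) :
    altProd (n + 1) x y = altProd n x y * if n.bodd then y else x := by
  induction n generalizing x y with
  | zero => simp [altProd]
  | succ n ih =>
    rw [altProd, ih, altProd, mul_assoc]
    cases h : n.bodd <;> simp [h]

theorem altProd_inv {G : Type*} [Group G] (n : ℕ) (x y : G) :
    (altProd n x y)⁻¹ = if n.bodd then altProd n x⁻¹ y⁻¹ else altProd n y⁻¹ x⁻¹ := by
  induction n generalizing x y with
  | zero => simp [altProd]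
  | succ n ih =>
    rw [altProd_succ_right, mul_inv_rev, ih]
    cases h : n.bodd <;> simp [h, altProd]

theorem altProd_inv_comm {G : Type*} [Group G] {n : ℕ} {x y : G}
    (h : altProd n x y = altProd n y x) :
    altProd n x⁻¹ y⁻¹ = (altProd n x y)⁻¹ ∧ altProd n y⁻¹ x⁻¹ = (altProd n x y)⁻¹ := by
  have h1 := altProd_inv n x y
  have h2 := altProd_inv n y x
  rw [← h] at h2
  cases hn : n.bodd <;> simp_all

theorem artin_relation_inv {a b : V} (h : Γ.graph.Adj a b) :
    altProd (Γ.label a b) (artinGen Γ a)⁻¹ (artinGen Γ b)⁻¹ =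
      altProd (Γ.label a b) (artinGen Γ b)⁻¹ (artinGen Γ a)⁻¹ := by
  obtain ⟨h1, h2⟩ := altProd_inv_comm (artin_relation Γ h)
  rw [h1, h2]

/-- The endomorphism inverting every standard generator. -/
def artinInvHom : ArtinGroup Γ →* ArtinGroup Γ :=
  artinLift Γ (fun v => (artinGen Γ v)⁻¹) fun _ _ h => artin_relation_inv Γ h

@[simp]
theorem artinInvHom_gen (v : V) : artinInvHom Γ (artinGen Γ v) = (artinGen Γ v)⁻¹ := by
  simp [artinInvHom]

theorem artinInvHom_letter (x : V × Bool) :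
    artinInvHom Γ (artinLetter Γ x) = artinLetter Γ (x.1, !x.2) := by
  rcases x with ⟨v, _ | _⟩ <;> simp

@[simp]
theorem artinInvHom_invHom (g : ArtinGroup Γ) : artinInvHom Γ (artinInvHom Γ g) = g := by
  have : (artinInvHom Γ).comp (artinInvHom Γ) = MonoidHom.id _ := by
    apply artin_hom_ext; intro v; simp
  exact DFunLike.congr_fun this g

/-- The global inversion. -/
def artinInv : MulAut (ArtinGroup Γ) where
  toFun := artinInvHom Γ
  invFun := artinInvHom Γ
  left_inv := artinInvHom_invHom Γ
  right_inv := artinInvHom_invHom Γ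
  map_mul' := map_mul _

theorem artinLen_map_le {V' : Type*} {Γ' : LabeledGraph V'} (f : ArtinGroup Γ →* ArtinGroup Γ')
    (σ : V × Bool → V' × Bool) (h : ∀ x, f (artinLetter Γ x) = artinLetter Γ' (σ x))
    (g : ArtinGroup Γ) : artinLen Γ' (f g) ≤ artinLen Γ g := by
  obtain ⟨L, h1, rfl⟩ := exists_word Γ g
  rw [map_list_prod, ← h1, List.map_map]
  have : f ∘ artinLetter Γ = artinLetter Γ' ∘ σ := funext h
  rw [this, ← List.map_map]
  simpa using artinLen_prod_le Γ' (L.map σ)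

@[simp]
theorem artinLen_invHom (g : ArtinGroup Γ) : artinLen Γ (artinInvHom Γ g) = artinLen Γ g := by
  have h := artinLen_map_le Γ (artinInvHom Γ) (fun x => (x.1, !x.2)) (artinInvHom_letter Γ)
  apply le_antisymm (h g)
  simpa using h (artinInvHom Γ g)

theorem isFirst_invHom {x : V × Bool} {g : ArtinGroup Γ} :
    IsFirst Γ x (artinInvHom Γ g) ↔ IsFirst Γ (x.1, !x.2) g := by
  unfold IsFirst
  have : (artinLetter Γ x)⁻¹ * artinInvHom Γ g =
      artinInvHom Γ ((artinLetter Γ (x.1, !x.2))⁻¹ * g) := by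
    rw [map_mul, map_inv, artinInvHom_letter]; simp
  rw [this, artinLen_invHom, artinLen_invHom]

/-- The properties of geodesics in a triangle-free large-type Artin group that are
propagated through amalgamated products. -/
structure GoodLen : Prop where
  adj : ∀ ⦃x y g⦄, IsFirst Γ x g → IsFirst Γ y g → x ≠ y → Γ.graph.Adj x.1 y.1
  label_le : ∀ ⦃x y g⦄, IsFirst Γ x g → IsFirst Γ y g → x ≠ y →
    Γ.label x.1 y.1 ≤ artinLen Γ g
  delta : ∀ ⦃a b g⦄, Γ.graph.Adj a b → IsFirst Γ (a, true) g → IsFirst Γ (b, true) g →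
    artinLen Γ g = Γ.label a b → g = artinDelta Γ a b
  twist : ∀ ⦃a b⦄, Γ.graph.Adj a b →
    artinLen Γ ((artinGen Γ b)⁻¹ * altProd (Γ.label a b - 1) (artinGen Γ a) (artinGen Γ b)) =
      Γ.label a b
  parabolic : ∀ ⦃I : Set V⦄ ⦃x h⦄, h ∈ standardSubgroup Γ I → IsFirst Γ x h → x.1 ∈ I

end Inversion

section DihedralModel

/-- Normal forms in the dihedral Artin group with parameter `m` : a power of the Garside
element, the lengths of the factors of the greedy normal form, and the first letter. -/
@[ext]
structure DihState where
  pow : ℤ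
  runs : List ℕ
  flag : Bool

namespace DihState

/-- The state with given data, with the flag normalized when there is no run. -/
def norm (k : ℤ) (l : List ℕ) (c : Bool) : DihState := ⟨k, l, l.isEmpty || c⟩

/-- Validity of a state. -/
def Valid (m : ℕ) (S : DihState) : Prop :=
  (∀ n ∈ S.runs, 1 ≤ n ∧ n < m) ∧ (S.runs = [] → S.flag = true)

/-- Left multiplication by a generator. -/
def push (m : ℕ) (s : Bool) : DihState → DihState
  | ⟨k, [], _⟩ => ⟨k, [1], s⟩
  | ⟨k, n :: l, c⟩ =>
    if s = c then ⟨k, 1 :: n :: l, c⟩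
    else if n + 1 = m then norm (k + 1) l c else ⟨k, (n + 1) :: l, s⟩

/-- Left multiplication by the inverse of a generator. -/
def pull (m : ℕ) (s : Bool) : DihState → DihState
  | ⟨k, [], _⟩ => ⟨k - 1, [m - 1], !s⟩
  | ⟨k, n :: l, c⟩ =>
    if s = c then if n = 1 then norm k l c else ⟨k, (n - 1) :: l, !c⟩
    else ⟨k - 1, (m - 1) :: n :: l, c⟩

variable {m : ℕ} (hm : 3 ≤ m)
include hm

theorem valid_push {s : Bool} {S : DihState} (h : S.Valid m) : (push m s S).Valid m := by
  rcases S with ⟨k, _ | ⟨n, l⟩, c⟩ <;> unfold push Valid at * <;> dsimp only at *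
  · simp; omega
  · split_ifs <;> cases l <;> simp_all [norm] <;> omega

theorem valid_pull {s : Bool} {S : DihState} (h : S.Valid m) : (pull m s S).Valid m := by
  rcases S with ⟨k, _ | ⟨n, l⟩, c⟩ <;> unfold pull Valid at * <;> dsimp only at *
  · simp; omega
  · split_ifs <;> cases l <;> simp_all [norm] <;> omega

theorem pull_push {s : Bool} {S : DihState} (h : S.Valid m) : pull m s (push m s S) = S := by
  rcases S with ⟨k, _ | ⟨n, l⟩, c⟩ <;> unfold Valid at h
  · simp_all [push, pull, norm]
  · by_cases h1 : s = c
    · simp [push, pull, norm, h1]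
    · by_cases h2 : n + 1 = m
      · have h3 : s = !c := by cases s <;> cases c <;> simp_all
        rcases l with _ | ⟨n', l⟩ <;> simp [push, pull, norm, h2, h3] <;> omega
      · have h3 : s = !c := by cases s <;> cases c <;> simp_all
        have h4 : n ≠ 0 := by have := h.1 n; simp at this; omega
        simp [push, pull, h2, h3, h4]

theorem push_pull {s : Bool} {S : DihState} (h : S.Valid m) : push m s (pull m s S) = S := by
  rcases S with ⟨k, _ | ⟨n, l⟩, c⟩ <;> unfold Valid at h
  · have : m - 1 + 1 = m := by omega
    simp_all [push, pull, norm]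
  · have h4 : 1 ≤ n ∧ n < m := h.1 n (by simp)
    have h5 : m - 1 + 1 = m := by omega
    by_cases h1 : s = c
    · by_cases h2 : n = 1
      · rcases l with _ | ⟨n', l⟩ <;> simp [push, pull, norm, h2, h1]
      · have h6 : n - 1 + 1 = n := by omega
        have h7 : n ≠ m := by omega
        simp [push, pull, h2, h1, h6, h7]
    · have h3 : s = !c := by cases s <;> cases c <;> simp_all
      simp [push, pull, norm, h3, h5]

/-- Left multiplication by a generator, as a permutation of the valid states. -/
def perm (s : Bool) : Equiv.Perm {S : DihState // S.Valid m} where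
  toFun S := ⟨push m s S, valid_push hm S.2⟩
  invFun S := ⟨pull m s S, valid_pull hm S.2⟩
  left_inv S := Subtype.ext (pull_push hm S.2)
  right_inv S := Subtype.ext (push_pull hm S.2)

omit hm in
/-- Left multiplication by an alternating word starting with `s`. -/
def pushAlt (m : ℕ) : ℕ → Bool → DihState → DihState
  | 0, _, S => S
  | j + 1, s, S => push m s (pushAlt m j (!s) S)

theorem altProd_perm (j : ℕ) (s : Bool) (S : {S : DihState // S.Valid m}) :
    ((altProd j (perm hm s) (perm hm (!s)) S : {S : DihState // S.Valid m}) : DihState) =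
      pushAlt m j s S := by
  induction j generalizing s with
  | zero => simp [altProd, pushAlt]
  | succ j ih =>
    have := ih (!s)
    rw [Bool.not_not] at this
    simp [altProd, pushAlt, ← this, perm]

omit hm in
theorem pushAlt_nil (k : ℤ) (c : Bool) (j : ℕ) (s : Bool) (h1 : 1 ≤ j) (h2 : j < m) :
    pushAlt m j s ⟨k, [], c⟩ = ⟨k, [j], s⟩ := by
  induction j, h1 using Nat.le_induction generalizing s with
  | base => simp [pushAlt, push]
  | succ j h ih =>
    rw [pushAlt, ih _ (by omega)]
    have : j + 1 ≠ m := by omega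
    simp [push, this]

omit hm in
theorem pushAlt_same (k : ℤ) (l : List ℕ) (j : ℕ) (s : Bool) (n : ℕ) (h1 : 1 ≤ j) (h2 : j < m) :
    pushAlt m j s ⟨k, n :: l, s ^^ !j.bodd⟩ = ⟨k, j :: n :: l, s⟩ := by
  induction j, h1 using Nat.le_induction generalizing s with
  | base => simp [pushAlt, push]
  | succ j h ih =>
    have h3 : (s ^^ !(j + 1).bodd) = ((!s) ^^ !j.bodd) := by
      simp
    rw [pushAlt, h3, ih _ (by omega)]
    have : j + 1 ≠ m := by omega
    simp [push, this]

omit hm in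
theorem pushAlt_diff (k : ℤ) (l : List ℕ) (j : ℕ) (s : Bool) (n : ℕ) (h2 : n + j < m) :
    pushAlt m j s ⟨k, n :: l, s ^^ j.bodd⟩ = ⟨k, (n + j) :: l, s⟩ := by
  induction j generalizing s with
  | zero => simp [pushAlt]
  | succ j ih =>
    have h3 : (s ^^ (j + 1).bodd) = ((!s) ^^ j.bodd) := by
      cases h : j.bodd <;> simp [h]
    rw [pushAlt, h3, ih _ (by omega)]
    have : n + j + 1 ≠ m := by omega
    simp [push, add_assoc]; omega

omit hm in
theorem pushAlt_add (i j : ℕ) (s : Bool) (S : DihState) :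
    pushAlt m (i + j) s S = pushAlt m i s (pushAlt m j (s ^^ i.bodd) S) := by
  induction i generalizing s with
  | zero => simp [pushAlt]
  | succ i ih =>
    rw [Nat.add_right_comm, pushAlt, ih, pushAlt]
    simp

theorem pushAlt_garside (s : Bool) (S : DihState) (h : S.Valid m) :
    pushAlt m m s S = norm (S.pow + 1) S.runs (S.flag ^^ m.bodd) := by
  obtain ⟨p, rfl⟩ : ∃ p, m = p + 1 := ⟨m - 1, by omega⟩
  rcases S with ⟨k, _ | ⟨n, l⟩, c⟩
  · rw [pushAlt, pushAlt_nil _ _ _ _ (by omega) (by omega)]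
    simp [push, norm]
  · obtain ⟨h1, h2⟩ : 1 ≤ n ∧ n < p + 1 := h.1 n (by simp)
    by_cases hc : c = (s ^^ !p.bodd ^^ true)
    · have := pushAlt_same (m := p + 1) k l p (!s) n (by omega) (by omega)
      have h3 : c = ((!s) ^^ !p.bodd) := by rw [hc]; cases s <;> simp
      rw [pushAlt, h3, this]
      simp [push, norm]
    · have hc : c = (s ^^ !p.bodd) := by cases s <;> cases c <;> simp_all
      obtain ⟨i, hi⟩ : ∃ i, p = n + i := ⟨p - n, by omega⟩
      have h4 : p + 1 = n + (1 + i) := by omega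
      have h6 := pushAlt_diff (m := p + 1) k l i (!s ^^ n.bodd) n (by omega)
      have h7 : c = ((!s ^^ n.bodd) ^^ i.bodd) := by rw [hc, hi]; simp
      have h5 : pushAlt (p + 1) (p + 1) s ⟨k, n :: l, c⟩ =
          pushAlt (p + 1) n s (push (p + 1) (s ^^ n.bodd) ⟨k, (n + i) :: l, !s ^^ n.bodd⟩) := by
        conv_lhs => rw [show pushAlt (p + 1) (p + 1) = pushAlt (p + 1) (n + (1 + i)) by rw [← h4]]
        rw [pushAlt_add, Nat.add_comm 1 i, pushAlt, h7]
        rw [← h6]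
        simp
      rw [h5]
      have h8 : push (p + 1) (s ^^ n.bodd) ⟨k, (n + i) :: l, !s ^^ n.bodd⟩ =
          norm (k + 1) l (!s ^^ n.bodd) := by
        simp [push, hi]
      rw [h8]
      rcases l with _ | ⟨n', l⟩
      · rw [norm, pushAlt_nil _ _ _ _ h1 h2]
        simp [norm, hc]
      · have := pushAlt_same (m := p + 1) (k + 1) l n s n' h1 h2
        simp only [norm, List.isEmpty_cons, Bool.false_or]
        rw [show (!s ^^ n.bodd) = (s ^^ !n.bodd) by simp, this, hc]
        simp

/-- The cost of a list of runs together with a power of the Garside element. -/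
def cost (m : ℕ) : List ℕ → ℤ → ℤ
  | [], k => m * |k|
  | n :: l, k => min (n + cost m l k) (m - n + cost m l (k + 1))

omit hm in
theorem abs_cost_succ_sub (l : List ℕ) (k : ℤ) :
    |cost m l (k + 1) - cost m l k| ≤ m := by
  induction l generalizing k with
  | nil =>
    rw [cost, cost, ← mul_sub, abs_mul, Nat.abs_cast]
    have : |(|k + 1| - |k|)| ≤ 1 := by
      simpa using abs_abs_sub_abs_le_abs_sub (k + 1) k
    nlinarith
  | cons n l ih =>
    have h1 := ih k
    have h2 := ih (k + 1)
    rw [cost, cost]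
    rw [abs_le] at *
    omega

omit hm in
theorem cost_convex (l : List ℕ) (k : ℤ) :
    2 * cost m l (k + 1) ≤ cost m l k + cost m l (k + 2) := by
  induction l generalizing k with
  | nil =>
    rw [cost, cost, cost, ← mul_add]
    have : 2 * |k + 1| ≤ |k| + |k + 2| := by
      rcases abs_cases k with h | h <;> rcases abs_cases (k + 1) with h' | h' <;>
        rcases abs_cases (k + 2) with h'' | h'' <;> omega
    nlinarith
  | cons n l ih =>
    have h1 := ih k
    have h2 := ih (k + 1)
    rw [cost, cost, cost]
    rw [show k + 1 + 1 = k + 2 by ring, show k + 1 + 2 = k + 2 + 1 by ring] at *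
    omega

theorem cost_nonneg {l : List ℕ} (hl : ∀ n ∈ l, 1 ≤ n ∧ n < m) (k : ℤ) : 0 ≤ cost m l k := by
  induction l generalizing k with
  | nil => rw [cost]; positivity
  | cons n l ih =>
    have h0 := hl n (by simp)
    have h1 := ih (fun n hn => hl n (List.mem_cons_of_mem _ hn)) k
    have h2 := ih (fun n hn => hl n (List.mem_cons_of_mem _ hn)) (k + 1)
    rw [cost]
    omega

theorem cost_cons_pos {l : List ℕ} {n : ℕ} (hl : ∀ i ∈ n :: l, 1 ≤ i ∧ i < m) (k : ℤ) :
    0 < cost m (n :: l) k := by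
  have h0 := hl n (by simp)
  have h1 := cost_nonneg hm (fun n hn => hl n (List.mem_cons_of_mem _ hn)) k
  have h2 := cost_nonneg hm (fun n hn => hl n (List.mem_cons_of_mem _ hn)) (k + 1)
  rw [cost]
  omega

theorem cost_add_cost {l : List ℕ} (hl : ∀ n ∈ l, 1 ≤ n ∧ n < m) (k : ℤ)
    (h : |cost m l (k + 1) - cost m l k| < m) : m ≤ cost m l k + cost m l (k + 1) := by
  induction l generalizing k with
  | nil =>
    exfalso
    rw [cost, cost, ← mul_sub, abs_mul, Nat.abs_cast] at h
    have : |(|k + 1| - |k|)| = 1 := by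
      rcases abs_cases k with h | h <;> rcases abs_cases (k + 1) with h' | h' <;>
        rcases abs_cases (|k + 1| - |k|) with h'' | h'' <;> omega
    rw [this] at h
    omega
  | cons n l ih =>
    have hl' : ∀ n ∈ l, 1 ≤ n ∧ n < m := fun n hn => hl n (List.mem_cons_of_mem _ hn)
    have h0 := hl n (by simp)
    have h1 := ih hl' k
    have h2 := ih hl' (k + 1)
    have h3 := cost_nonneg hm hl' k
    have h4 := cost_nonneg hm hl' (k + 1)
    have h5 := cost_nonneg hm hl' (k + 1 + 1)
    rw [cost, cost] at *
    simp only [abs_lt] at *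
    omega

/-- The cost of a state. -/
def len (m : ℕ) (S : DihState) : ℤ := cost m S.runs S.pow

theorem len_nonneg {S : DihState} (h : S.Valid m) : 0 ≤ len m S := cost_nonneg hm h.1 _

omit hm in
theorem len_push_le {s : Bool} {S : DihState} (h : S.Valid m) :
    len m (push m s S) ≤ len m S + 1 := by
  rcases S with ⟨k, _ | ⟨n, l⟩, c⟩
  · simp only [push, len, cost, Nat.cast_one]; omega
  · obtain ⟨h1, h2⟩ : 1 ≤ n ∧ n < m := h.1 n (by simp)
    have h3 := abs_le.1 (abs_cost_succ_sub (m := m) l k)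
    simp only [push]
    split_ifs <;> simp only [len, cost, norm, Nat.cast_add, Nat.cast_one] <;> omega

theorem len_pull_le {s : Bool} {S : DihState} (h : S.Valid m) :
    len m (pull m s S) ≤ len m S + 1 := by
  have h0 : ((m - 1 : ℕ) : ℤ) = m - 1 := by omega
  rcases S with ⟨k, _ | ⟨n, l⟩, c⟩
  · simp only [pull, len, cost, sub_add_cancel, h0]; omega
  · obtain ⟨h1, h2⟩ : 1 ≤ n ∧ n < m := h.1 n (by simp)
    have h3 := abs_le.1 (abs_cost_succ_sub (m := m) l k)
    have h4 : ((n - 1 : ℕ) : ℤ) = n - 1 := by omega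
    simp only [pull]
    split_ifs <;> simp only [len, cost, norm, sub_add_cancel, h0, h4] <;> omega

theorem exists_len_lt {S : DihState} (h : S.Valid m) (h0 : len m S ≠ 0) :
    ∃ s, len m (push m s S) < len m S ∨ len m (pull m s S) < len m S := by
  have hm1 : ((m - 1 : ℕ) : ℤ) = m - 1 := by omega
  rcases S with ⟨k, _ | ⟨n, l⟩, c⟩
  · refine ⟨true, ?_⟩
    have hk : k ≠ 0 := by rintro rfl; simp [len, cost] at h0
    rcases lt_or_gt_of_ne hk with hk | hk
    · left
      have h1 : |k| = |k + 1| + 1 := by rw [abs_of_neg hk, abs_of_nonpos (by omega)]; ring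
      simp only [push, len, cost, h1, mul_add]
      omega
    · right
      have h1 : |k| = |k - 1| + 1 := by rw [abs_of_pos hk, abs_of_nonneg (by omega)]; ring
      simp only [pull, len, cost, sub_add_cancel, h1, mul_add, hm1]
      omega
  · obtain ⟨h1, h2⟩ : 1 ≤ n ∧ n < m := h.1 n (by simp)
    by_cases hn : n + cost m l k ≤ m - n + cost m l (k + 1)
    · refine ⟨c, Or.inr ?_⟩
      have h4 : ((n - 1 : ℕ) : ℤ) = n - 1 := by omega
      simp only [pull, if_true]
      split_ifs <;> simp only [len, cost, norm, h4] <;> omega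
    · refine ⟨!c, Or.inl ?_⟩
      simp only [push, Bool.not_eq_eq_eq_not, Bool.eq_not_self, if_false]
      split_ifs <;> simp only [len, cost, norm, Nat.cast_add, Nat.cast_one] <;> omega

theorem eq_of_len_eq_zero {S : DihState} (h : S.Valid m) (h0 : len m S = 0) :
    S = ⟨0, [], true⟩ := by
  rcases S with ⟨k, _ | ⟨n, l⟩, c⟩
  · have h1 := h.2 rfl
    simp only [len, cost, mul_eq_zero, abs_eq_zero] at h0 h1
    ext <;> simp_all
    omega
  · exact absurd h0 (cost_cons_pos hm h.1 k).ne'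

/-- Left multiplication by a letter. -/
def act (m : ℕ) (x : Bool × Bool) (S : DihState) : DihState :=
  if x.2 then push m x.1 S else pull m x.1 S

/-- The letter is the first letter of a shortest word for the state. -/
def First (m : ℕ) (x : Bool × Bool) (S : DihState) : Prop :=
  len m (act m (x.1, !x.2) S) < len m S

theorem first_cons {k : ℤ} {n : ℕ} {l : List ℕ} {c : Bool} (h : Valid m ⟨k, n :: l, c⟩)
    {x : Bool × Bool} (hx : First m x ⟨k, n :: l, c⟩) :
    (x = (c, true) ∧ n + cost m l k ≤ m - n + cost m l (k + 1)) ∨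
    (x = (!c, false) ∧ m - n + cost m l (k + 1) ≤ n + cost m l k) ∨
    (x = (c, false) ∧ cost m (n :: l) (k + 1) ≤ cost m (n :: l) k - m) ∨
    (x = (!c, true) ∧ cost m (n :: l) (k - 1) ≤ cost m (n :: l) k - m) := by
  have hm1 : ((m - 1 : ℕ) : ℤ) = m - 1 := by omega
  obtain ⟨h1, h2⟩ : 1 ≤ n ∧ n < m := h.1 n (by simp)
  have h4 : ((n - 1 : ℕ) : ℤ) = n - 1 := by omega
  rcases x with ⟨s, e⟩
  obtain rfl | rfl : s = c ∨ s = !c := by cases s <;> cases c <;> simp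
  · cases e
    · right; right; left
      refine ⟨rfl, ?_⟩
      simp only [First, act, push, len, Bool.not_false, if_true] at hx
      rw [cost] at hx
      push_cast at hx
      omega
    · left
      refine ⟨rfl, ?_⟩
      simp only [First, act, pull, Bool.not_true, if_false, if_true, Bool.false_eq_true] at hx
      split_ifs at hx <;> simp only [len, cost, norm, h4] at hx <;> omega
  · cases e
    · right; left
      refine ⟨rfl, ?_⟩
      simp only [First, act, push, Bool.not_false, if_true, Bool.not_eq_eq_eq_not,
        Bool.eq_not_self, if_false] at hx
      split_ifs at hx <;> simp only [len, cost, norm, Nat.cast_add, Nat.cast_one] at hx <;> omega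
    · right; right; right
      refine ⟨rfl, ?_⟩
      simp only [First, act, pull, len, Bool.not_true, if_false, Bool.not_eq_eq_eq_not,
        Bool.eq_not_self, Bool.false_eq_true] at hx
      rw [cost, sub_add_cancel, hm1] at hx
      omega

theorem first_nil {k : ℤ} {c : Bool} {x : Bool × Bool} (hx : First m x ⟨k, [], c⟩) :
    (x.2 = true ∧ 1 ≤ k) ∨ (x.2 = false ∧ k ≤ -1) := by
  have hm1 : ((m - 1 : ℕ) : ℤ) = m - 1 := by omega
  rcases x with ⟨s, _ | _⟩
  · right
    refine ⟨rfl, ?_⟩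
    by_contra hk
    have h1 : |k + 1| = |k| + 1 := by
      rw [abs_of_nonneg (by omega), abs_of_nonneg (by omega)]
    simp only [First, act, push, len, cost, Bool.not_false, if_true, h1, mul_add,
      Nat.cast_one] at hx
    omega
  · left
    refine ⟨rfl, ?_⟩
    by_contra hk
    have h1 : |k - 1| = |k| + 1 := by
      rw [abs_of_neg (by omega), abs_of_nonpos (by omega)]; ring
    simp only [First, act, pull, len, cost, Bool.not_true, if_false, h1, mul_add,
      sub_add_cancel, hm1, Bool.false_eq_true] at hx
    omega

/-- Two distinct first letters involve distinct generators, and then the length is at least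
`m`, with equality for letters of the same sign only at a power of the Garside element. -/
theorem first_first {S : DihState} (h : S.Valid m) {x y : Bool × Bool} (hx : First m x S)
    (hy : First m y S) (hxy : x ≠ y) :
    x.1 ≠ y.1 ∧ m ≤ len m S ∧ (x.2 = true → y.2 = true → len m S = m → S = ⟨1, [], true⟩) := by
  rcases S with ⟨k, _ | ⟨n, l⟩, c⟩
  · have h1 := first_nil hm hx
    have h2 := first_nil hm hy
    have h3 : 1 ≤ |k| := Int.one_le_abs (by omega)
    have hc := h.2 rfl
    simp only at hc
    subst hc
    refine ⟨fun h4 => hxy (Prod.ext h4 ?_), ?_, fun h4 h5 h6 => ?_⟩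
    · rcases h1 with h1 | h1 <;> rcases h2 with h2 | h2 <;> first | omega | rw [h1.1, h2.1]
    · simp only [len, cost]; nlinarith
    · simp only [len, cost] at h6
      have h7 : |k| = 1 := by
        have : (m : ℤ) ≠ 0 := by omega
        exact mul_left_cancel₀ this (by rw [h6, mul_one])
      have h8 : k = 1 := by rw [abs_of_nonneg (by simp_all; omega)] at h7; exact h7
      rw [h8]
  · have hl : ∀ n ∈ l, 1 ≤ n ∧ n < m := fun n hn => h.1 n (List.mem_cons_of_mem _ hn)
    obtain ⟨h1, h2⟩ : 1 ≤ n ∧ n < m := h.1 n (by simp)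
    have c0 := cost_cons_pos hm h.1 (k - 1)
    have c1 := cost_cons_pos hm h.1 (k + 1)
    have c2 := cost_convex (m := m) (n :: l) (k - 1)
    have c3 := cost_convex (m := m) l k
    have c4 := cost_convex (m := m) l (k - 1)
    have c5 := cost_add_cost hm hl k
    have e1 : cost m (n :: l) k = min (n + cost m l k) (m - n + cost m l (k + 1)) := rfl
    have e2 : cost m (n :: l) (k + 1) = min (n + cost m l (k + 1)) (m - n + cost m l (k + 2)) := by
      rw [cost, add_assoc]; rfl
    have e3 : cost m (n :: l) (k - 1) = min (n + cost m l (k - 1)) (m - n + cost m l k) := by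
      rw [cost, sub_add_cancel]
    rw [abs_lt] at c5
    rw [sub_add_cancel, show k - 1 + 2 = k + 1 by ring] at c2 c4
    have h1 := first_cons hm h hx
    have h2 := first_cons hm h hy
    have key : len m ⟨k, n :: l, c⟩ = cost m (n :: l) k := rfl
    rw [key]
    rcases h1 with ⟨rfl, h1⟩ | ⟨rfl, h1⟩ | ⟨rfl, h1⟩ | ⟨rfl, h1⟩ <;>
    rcases h2 with ⟨rfl, h2⟩ | ⟨rfl, h2⟩ | ⟨rfl, h2⟩ | ⟨rfl, h2⟩ <;>
    first
    | exact absurd rfl hxy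
    | (exfalso; omega)
    | (refine ⟨by simp, by omega, ?_⟩
       simp only [reduceCtorEq, false_imp_iff, imp_true_iff, true_imp_iff]
       try (intro; exfalso; omega))

theorem cost_replicate_one (j : ℕ) :
    cost m (List.replicate j 1) 0 = j ∧ cost m (List.replicate j 1) 1 = m + j ∧
      (1 ≤ j → cost m (List.replicate j 1) (-1) = m - 2 + j) := by
  have key : ∀ j : ℕ, ∀ k : ℤ, 0 ≤ k → cost m (List.replicate j 1) k = m * k + j := by
    intro j
    induction j with
    | zero => intro k hk; simp [cost, abs_of_nonneg hk]
    | succ j ih =>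
      intro k hk
      rw [List.replicate_succ, cost, ih k hk, ih (k + 1) (by omega), mul_add]
      push_cast
      omega
  refine ⟨by simpa using key j 0, by simpa using key j 1, ?_⟩
  intro hj
  induction j, hj using Nat.le_induction with
  | base => simp [cost]; omega
  | succ j hj ih =>
    rw [List.replicate_succ, cost, ih, show (-1 : ℤ) + 1 = 0 by ring, key j 0 le_rfl]
    push_cast
    omega

end DihState

end DihedralModel

section Dihedral

namespace DihState

/-- The group element represented by a state. -/
def evalRuns {G : Type*} [Group G] (w : Bool → G) (d : G) : List ℕ → Bool → ℤ → G
  | [], _, k => d ^ k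
  | n :: l, c, k => altProd n (w c) (w !c) * evalRuns w d l (c ^^ !n.bodd) k

/-- The group element represented by a state. -/
def eval {G : Type*} [Group G] (w : Bool → G) (d : G) (S : DihState) : G :=
  evalRuns w d S.runs S.flag S.pow

section Evaluation

variable {G : Type*} [Group G] {w : Bool → G} {d : G} {m : ℕ}
  (hd : ∀ s, altProd m (w s) (w !s) = d)
include hd

theorem gen_mul_garside (s : Bool) : w s * d = d * w (s ^^ m.bodd) := by
  have h1 := altProd_succ_right m (w s) (w !s)
  have h2 := hd (!s)
  rw [Bool.not_not] at h2
  rw [altProd, h2, hd] at h1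
  rw [h1]
  cases m.bodd <;> simp

theorem altProd_mul_garside (n : ℕ) (c : Bool) :
    altProd n (w c) (w !c) * d =
      d * altProd n (w (c ^^ m.bodd)) (w !(c ^^ m.bodd)) := by
  induction n generalizing c with
  | zero => simp [altProd]
  | succ n ih =>
    have := ih (!c)
    rw [Bool.not_not] at this
    rw [altProd, mul_assoc, this, ← mul_assoc, gen_mul_garside hd, mul_assoc, altProd]
    simp

theorem evalRuns_succ (l : List ℕ) (c : Bool) (k : ℤ) :
    evalRuns w d l c (k + 1) = d * evalRuns w d l (c ^^ m.bodd) k := by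
  induction l generalizing c with
  | nil => rw [evalRuns, evalRuns, add_comm, zpow_one_add]
  | cons n l ih =>
    rw [evalRuns, evalRuns, ih, ← mul_assoc, altProd_mul_garside hd, mul_assoc]
    congr 3
    cases c <;> cases m.bodd <;> simp

omit hd in
theorem eval_norm (k : ℤ) (l : List ℕ) (c : Bool) :
    eval w d (norm k l c) = evalRuns w d l c k := by
  cases l <;> simp [eval, norm, evalRuns]

theorem eval_push (s : Bool) (S : DihState) :
    eval w d (push m s S) = w s * eval w d S := by
  rcases S with ⟨k, _ | ⟨n, l⟩, c⟩
  · simp [push, eval, evalRuns, altProd]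
  · by_cases h1 : s = c
    · subst h1
      simp [push, eval, evalRuns, altProd]
    · have h3 : c = !s := by cases s <;> cases c <;> simp_all
      subst h3
      by_cases h2 : n + 1 = m
      · simp only [push, Bool.eq_not_self, if_false, h2, if_true]
        rw [eval_norm, eval]
        simp only [evalRuns, Bool.not_not, ← mul_assoc]
        have h4 : w s * altProd n (w !s) (w s) = d := by rw [← hd s, ← h2, altProd]
        rw [h4, evalRuns_succ hd, ← h2]
        simp
      · simp [push, h2, eval, evalRuns, altProd, mul_assoc]

theorem eval_pull (hm : 3 ≤ m) (s : Bool) (S : DihState) (h : S.Valid m) :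
    eval w d (pull m s S) = (w s)⁻¹ * eval w d S := by
  rw [eq_inv_mul_iff_mul_eq, ← eval_push hd, push_pull hm h]

end Evaluation

end DihState

variable {V : Type*} (Γ : LabeledGraph V) (e : Bool ≃ V)
  (hadj : Γ.graph.Adj (e true) (e false)) (hm : 3 ≤ Γ.label (e true) (e false))

theorem dihedral_adj_cases {a b : V} (h : Γ.graph.Adj a b) :
    Γ.label a b = Γ.label (e true) (e false) ∧ e.symm b = !e.symm a := by
  obtain ⟨s, rfl⟩ := e.surjective a
  obtain ⟨t, rfl⟩ := e.surjective b
  cases s <;> cases t <;> simp_all [Γ.label_symm (e false) (e true)]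

/-- The action of the dihedral Artin group on normal forms. -/
def dihedralHom : ArtinGroup Γ →*
    Equiv.Perm {S : DihState // S.Valid (Γ.label (e true) (e false))} :=
  artinLift Γ (fun v => DihState.perm hm (e.symm v)) fun a b h => by
    obtain ⟨h1, h2⟩ := dihedral_adj_cases Γ e h
    rw [h1, h2]
    ext1 S
    apply Subtype.ext
    have := DihState.altProd_perm hm (Γ.label (e true) (e false)) (!e.symm a) S
    rw [Bool.not_not] at this
    rw [DihState.altProd_perm, this, DihState.pushAlt_garside hm _ _ S.2,
      DihState.pushAlt_garside hm _ _ S.2]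

/-- The normal form of an element of the dihedral Artin group. -/
def dihedralState (g : ArtinGroup Γ) : DihState :=
  dihedralHom Γ e hm g ⟨⟨0, [], true⟩, by simp [DihState.Valid]⟩

theorem dihedralState_valid (g : ArtinGroup Γ) :
    (dihedralState Γ e hm g).Valid (Γ.label (e true) (e false)) := Subtype.property _

theorem dihedralState_one : dihedralState Γ e hm 1 = ⟨0, [], true⟩ := by
  simp [dihedralState]

theorem dihedralState_letter_mul (x : V × Bool) (g : ArtinGroup Γ) :
    dihedralState Γ e hm (artinLetter Γ x * g) =
      DihState.act (Γ.label (e true) (e false)) (e.symm x.1, x.2) (dihedralState Γ e hm g) := by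
  rcases x with ⟨v, _ | _⟩ <;>
  simp [dihedralState, dihedralHom, DihState.act, DihState.perm]

include hadj

theorem eval_dihedralState (g : ArtinGroup Γ) :
    DihState.eval (fun s => artinGen Γ (e s)) (artinDelta Γ (e true) (e false))
      (dihedralState Γ e hm g) = g := by
  have hd : ∀ s, altProd (Γ.label (e true) (e false)) (artinGen Γ (e s)) (artinGen Γ (e !s)) =
      artinDelta Γ (e true) (e false) := by
    rintro (_ | _)
    · exact (artin_relation Γ hadj).symm
    · rfl
  induction g using artin_induction with
  | one => simp [dihedralState_one, DihState.eval, DihState.evalRuns]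
  | mul x g ih =>
    rw [dihedralState_letter_mul]
    conv_rhs => rw [← ih]
    rcases x with ⟨v, _ | _⟩
    · simp only [DihState.act, Bool.false_eq_true, if_false]
      rw [DihState.eval_pull hd hm _ _ (dihedralState_valid Γ e hm g)]
      simp
    · simp only [DihState.act, if_true]
      rw [DihState.eval_push hd]
      simp

theorem artinLen_dihedral (g : ArtinGroup Γ) : (artinLen Γ g : ℤ) =
    DihState.len (Γ.label (e true) (e false)) (dihedralState Γ e hm g) := by
  have hn : ∀ g, 0 ≤ DihState.len (Γ.label (e true) (e false)) (dihedralState Γ e hm g) :=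
    fun g => DihState.len_nonneg hm (dihedralState_valid Γ e hm g)
  rw [artinLen_unique Γ
    (fun g => (DihState.len (Γ.label (e true) (e false)) (dihedralState Γ e hm g)).toNat),
    Int.toNat_of_nonneg (hn g)]
  · simp [dihedralState_one, DihState.len, DihState.cost]
  · intro x g
    have hv := dihedralState_valid Γ e hm g
    have h1 := DihState.len_push_le (s := e.symm x.1) hv
    have h2 := DihState.len_pull_le hm (s := e.symm x.1) hv
    have := hn g
    rw [dihedralState_letter_mul]
    rcases x with ⟨v, _ | _⟩ <;> simp only [DihState.act, if_true, if_false, Bool.false_eq_true] <;>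
    dsimp only at h1 h2 <;> omega
  · intro g hg
    have := hn g
    obtain ⟨s, h | h⟩ := DihState.exists_len_lt hm (dihedralState_valid Γ e hm g) (by omega)
    · refine ⟨(e s, true), ?_⟩
      simp only [dihedralState_letter_mul, DihState.act, if_true, Equiv.symm_apply_apply]
      omega
    · refine ⟨(e s, false), ?_⟩
      simp only [dihedralState_letter_mul, DihState.act, if_false, Equiv.symm_apply_apply,
        Bool.false_eq_true]
      omega
  · intro g hg
    have := hn g
    have h1 := DihState.eq_of_len_eq_zero hm (dihedralState_valid Γ e hm g) (by omega)
    rw [← eval_dihedralState Γ e hadj hm g, h1]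
    simp [DihState.eval, DihState.evalRuns]

theorem isFirst_dihedral {x : V × Bool} {g : ArtinGroup Γ} : IsFirst Γ x g ↔
    DihState.First (Γ.label (e true) (e false)) (e.symm x.1, x.2) (dihedralState Γ e hm g) := by
  unfold IsFirst DihState.First
  rw [← Nat.cast_lt (α := ℤ), artinLen_dihedral Γ e hadj hm, artinLen_dihedral Γ e hadj hm,
    ← artinLetter_not, dihedralState_letter_mul]

omit hadj in
theorem dihedralState_gen_pow (s : Bool) (j : ℕ) :
    dihedralState Γ e hm (artinGen Γ (e s) ^ j) = DihState.norm 0 (List.replicate j 1) s := by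
  induction j with
  | zero => simp [dihedralState_one, DihState.norm]
  | succ j ih =>
    rw [pow_succ', ← artinLetter_true, dihedralState_letter_mul, artinLetter_true, ih]
    cases j <;> simp [DihState.act, DihState.push, DihState.norm, List.replicate_succ]

include hm

theorem first_gen_pow {x : V × Bool} {s : Bool} {j : ℕ}
    (h : IsFirst Γ x (artinGen Γ (e s) ^ j)) : x.1 = e s := by
  cases j with
  | zero => exact absurd h (by simpa using not_isFirst_one Γ x)
  | succ j =>
    have hv := dihedralState_valid Γ e hm (artinGen Γ (e s) ^ (j + 1))
    rw [isFirst_dihedral Γ e hadj hm] at h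
    rw [dihedralState_gen_pow Γ e hm, List.replicate_succ, DihState.norm] at h hv
    simp only [List.isEmpty_cons, Bool.false_or] at h hv
    obtain ⟨h1, h2, -⟩ := DihState.cost_replicate_one hm j
    obtain ⟨h3, h4, h5⟩ := DihState.cost_replicate_one hm (j + 1)
    rw [List.replicate_succ] at h3 h4 h5
    have h6 := DihState.first_cons hm hv h
    rw [zero_add, zero_sub, h1, h2, h3, h4, h5 (by omega)] at h6
    rw [← e.symm_apply_eq]
    simp only [Prod.mk.injEq] at h6
    push_cast at h6
    rcases h6 with h6 | h6 | h6 | h6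
    · exact h6.1.1
    · exfalso; omega
    · exact h6.1.1
    · exfalso; omega

theorem goodLen_dihedral : GoodLen Γ where
  adj x y g hx hy hxy := by
    rw [isFirst_dihedral Γ e hadj hm] at hx hy
    have hne : ((e.symm x.1, x.2) : Bool × Bool) ≠ (e.symm y.1, y.2) := by
      intro h; apply hxy; rw [Prod.mk.injEq] at h; exact Prod.ext (e.symm.injective h.1) h.2
    have h1 := (DihState.first_first hm (dihedralState_valid Γ e hm g) hx hy hne).1
    obtain ⟨s, hs⟩ := e.surjective x.1
    obtain ⟨t, ht⟩ := e.surjective y.1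
    rw [← hs, ← ht] at h1 ⊢
    cases s <;> cases t <;>
      first | exact hadj | exact hadj.symm | exact absurd rfl h1
  label_le x y g hx hy hxy := by
    rw [isFirst_dihedral Γ e hadj hm] at hx hy
    have hne : ((e.symm x.1, x.2) : Bool × Bool) ≠ (e.symm y.1, y.2) := by
      intro h; apply hxy; rw [Prod.mk.injEq] at h; exact Prod.ext (e.symm.injective h.1) h.2
    have h1 := DihState.first_first hm (dihedralState_valid Γ e hm g) hx hy hne
    have h2 : Γ.label x.1 y.1 = Γ.label (e true) (e false) := by
      obtain ⟨s, hs⟩ := e.surjective x.1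
      obtain ⟨t, ht⟩ := e.surjective y.1
      have h1 := h1.1
      rw [← hs, ← ht] at h1 ⊢
      cases s <;> cases t <;>
        first | rfl | exact Γ.label_symm _ _ | exact absurd rfl h1
    rw [h2, ← Nat.cast_le (α := ℤ), artinLen_dihedral Γ e hadj hm]
    exact h1.2.1
  delta a b g hab hx hy hg := by
    rw [isFirst_dihedral Γ e hadj hm] at hx hy
    obtain ⟨h1, h2⟩ := dihedral_adj_cases Γ e hab
    have hne : ((e.symm a, true) : Bool × Bool) ≠ (e.symm b, true) := by
      simp [h2]
    have h3 := (DihState.first_first hm (dihedralState_valid Γ e hm g) hx hy hne).2.2 rfl rfl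
      (by rw [← artinLen_dihedral Γ e hadj hm, hg, h1])
    rw [← eval_dihedralState Γ e hadj hm g, h3]
    simp only [DihState.eval, DihState.evalRuns, zpow_one]
    obtain ⟨s, rfl⟩ := e.surjective a
    obtain ⟨t, rfl⟩ := e.surjective b
    cases s <;> cases t <;> simp at h2 ⊢
    unfold artinDelta
    rw [Γ.label_symm (e false), artin_relation Γ hadj]
  twist a b hab := by
    obtain ⟨h1, h2⟩ := dihedral_adj_cases Γ e hab
    rw [h1]
    set m := Γ.label (e true) (e false) with hmdef
    have h3 : dihedralState Γ e hm (altProd (m - 1) (artinGen Γ a) (artinGen Γ b)) =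
        ⟨0, [m - 1], e.symm a⟩ := by
      have h4 := DihState.altProd_perm hm (m - 1) (e.symm a)
        ⟨⟨0, [], true⟩, by simp [DihState.Valid]⟩
      rw [DihState.pushAlt_nil _ _ _ _ (by omega) (by omega)] at h4
      rw [← h4, dihedralState, map_altProd]
      simp [dihedralHom, h2]
    rw [← artinLetter_false, ← Nat.cast_inj (R := ℤ), artinLen_dihedral Γ e hadj hm,
      dihedralState_letter_mul, h3]
    have h5 : ((m - 1 : ℕ) : ℤ) = m - 1 := by omega
    simp [DihState.act, DihState.pull, h2, DihState.len, DihState.cost, ← hmdef, h5]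
    omega
  parabolic I x h hh hx := by
    by_cases hI : ∀ a ∈ I, ∀ b ∈ I, ¬ Γ.graph.Adj a b
    swap
    · push Not at hI
      obtain ⟨a, ha, b, hb, hab⟩ := hI
      obtain ⟨s, rfl⟩ := e.surjective a
      obtain ⟨t, rfl⟩ := e.surjective b
      obtain ⟨u, hu⟩ := e.surjective x.1
      rw [← hu]
      have hst : s ≠ t := by
        rintro rfl
        exact hab.ne rfl
      cases u <;> cases s <;> cases t <;> simp_all
    obtain ⟨s, hs⟩ : ∃ s, I ⊆ {e s} := by
      by_cases ht : e true ∈ I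
      · refine ⟨true, fun v hv => ?_⟩
        obtain ⟨t, rfl⟩ := e.surjective v
        cases t
        · exact absurd hadj (hI _ ht _ hv)
        · rfl
      · refine ⟨false, fun v hv => ?_⟩
        obtain ⟨t, rfl⟩ := e.surjective v
        cases t
        · rfl
        · exact absurd hv ht
    rcases I.eq_empty_or_nonempty with rfl | ⟨v, hv⟩
    · simp [standardSubgroup] at hh
      subst hh
      exact absurd hx (not_isFirst_one Γ x)
    · have hv' : v = e s := hs hv
      have h1 : h ∈ Subgroup.zpowers (artinGen Γ (e s)) := by
        rw [Subgroup.zpowers_eq_closure]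
        refine Subgroup.closure_mono ?_ hh
        simpa using Set.image_mono (f := artinGen Γ) hs
      obtain ⟨j, rfl⟩ := Subgroup.mem_zpowers_iff.1 h1
      suffices x.1 = e s by rw [this, ← hv']; exact hv
      obtain ⟨j, rfl | rfl⟩ := j.eq_nat_or_neg
      · rw [zpow_natCast] at hx
        exact first_gen_pow Γ e hadj hm hx
      · have h2 : artinGen Γ (e s) ^ (-j : ℤ) = artinInvHom Γ (artinGen Γ (e s) ^ j) := by
          simp
        rw [h2, isFirst_invHom] at hx
        exact first_gen_pow Γ e hadj hm (x := (x.1, !x.2)) hx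

end Dihedral

section NormalForm

open Monoid Monoid.PushoutI Monoid.PushoutI.NormalWord

variable {ι H : Type*} {G : ι → Type*} [∀ i, Group (G i)] [Group H] {φ : ∀ i, H →* G i}
  {d : Transversal φ} (lH : H → ℕ) (lG : ∀ i, G i → ℕ)

/-- The total length of the letters of a word. -/
def wordLenSum (w : CoprodI.Word G) : ℕ := (w.toList.map fun p => lG p.1 p.2).sum

/-- The length of a normal word. -/
def normalLen (w : NormalWord d) : ℕ := lH w.head + wordLenSum lG w.toWord

variable [DecidableEq ι] [∀ i, DecidableEq (G i)]

omit [DecidableEq ι] in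
theorem wordLenSum_rcons (h1 : ∀ i, lG i 1 = 0) {i : ι} (p : CoprodI.Word.Pair G i) :
    wordLenSum lG (CoprodI.Word.rcons p) = lG i p.head + wordLenSum lG p.tail := by
  unfold CoprodI.Word.rcons
  split_ifs with h
  · simp [h, h1]
  · simp [CoprodI.Word.cons, wordLenSum]

theorem normalLen_rcons (h1 : ∀ i, lG i 1 = 0)
    (hgate : ∀ i h t, t ∈ d.set i → lG i (φ i h * t) = lH h + lG i t)
    {i : ι} (p : NormalWord.Pair d i) :
    normalLen lH lG (NormalWord.rcons i p) = lG i p.head + wordLenSum lG p.tail := by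
  unfold normalLen NormalWord.rcons
  simp only
  rw [CoprodI.Word.equivPair_symm, wordLenSum_rcons lG h1, ← add_assoc,
    ← hgate _ _ _ (Subtype.coe_prop _), MonoidHom.apply_ofInjective_symm,
    Subgroup.IsComplement.equiv_fst_mul_equiv_snd]

/-- The part of a normal word lying in the `i`-th factor. -/
noncomputable def localHead (i : ι) (w : NormalWord d) : G i := (NormalWord.equivPair i w).head

/-- The length of the remaining part of a normal word. -/
noncomputable def localRest (i : ι) (w : NormalWord d) : ℕ :=
  wordLenSum lG (NormalWord.equivPair i w).tail

theorem normalLen_of_smul (h1 : ∀ i, lG i 1 = 0)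
    (hgate : ∀ i h t, t ∈ d.set i → lG i (φ i h * t) = lH h + lG i t)
    {i : ι} (g : G i) (w : NormalWord d) :
    normalLen lH lG (of (φ := φ) i g • w) = lG i (g * localHead i w) + localRest lG i w := by
  rw [summand_smul_def]
  exact normalLen_rcons lH lG h1 hgate _

theorem localHead_eq (i : ι) (w : NormalWord d) :
    localHead i w = φ i w.head * (CoprodI.Word.equivPair i w.toWord).head := by
  unfold localHead NormalWord.equivPair
  simp only [Equiv.coe_fn_mk]
  rw [CoprodI.Word.equivPair_smul_same]

theorem exists_localHead_mem_range [Nonempty ι] (w : NormalWord d) :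
    ∃ i, ∀ j, j ≠ i → localHead j w ∈ (φ j).range := by
  rcases hw : w.toList with _ | ⟨⟨i, t⟩, l⟩
  · refine ⟨Classical.arbitrary ι, fun j _ => ?_⟩
    rw [localHead_eq, CoprodI.Word.equivPair_eq_of_fstIdx_ne (by simp [CoprodI.Word.fstIdx, hw])]
    simp
  · refine ⟨i, fun j hj => ?_⟩
    rw [localHead_eq, CoprodI.Word.equivPair_eq_of_fstIdx_ne
      (by simpa [CoprodI.Word.fstIdx, hw] using hj.symm)]
    simp

theorem eq_empty_of_localHead [Nonempty ι] (h1 : ∀ i, lG i 1 = 0)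
    (hgate : ∀ i h t, t ∈ d.set i → lG i (φ i h * t) = lH h + lG i t)
    (hz : ∀ i g, lG i g = 0 → g = 1)
    (w : NormalWord d) (h : ∀ i, localHead i w = 1) : w = NormalWord.empty := by
  rcases hw : w.toList with _ | ⟨⟨i, t⟩, l⟩
  · obtain ⟨i⟩ := ‹Nonempty ι›
    have h2 := h i
    rw [localHead_eq, CoprodI.Word.equivPair_eq_of_fstIdx_ne
      (by simp [CoprodI.Word.fstIdx, hw]), mul_one] at h2
    have h3 : w.head = 1 := d.injective i (by rw [h2, map_one])
    exact NormalWord.ext h3 hw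
  · exfalso
    have h2 := h i
    have h3 : (CoprodI.Word.equivPair i w.toWord).head = t := by
      have aux : ∀ (L : List (Σ i, G i)) (_ : L = ⟨i, t⟩ :: l) (hL : L ≠ [])
          (h2 : (L.head hL).1 = i), h2 ▸ (L.head hL).2 = t := by
        rintro _ rfl _ h2
        rfl
      rw [CoprodI.Word.equivPair_head, dif_pos ⟨by simp [hw], by simp [hw]⟩]
      exact aux _ hw _ _
    have h4 := w.ne_one ⟨i, t⟩ (by simp [hw])
    have h5 := hgate i w.head t (w.normalized i t (by simp [hw]))
    rw [localHead_eq, h3] at h2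
    rw [h2, h1] at h5
    exact h4 (hz i t (by omega))

/-- A normal word all of whose constituents lie in the given subgroups. -/
def WordIn (KH : Subgroup H) (K : ∀ i, Subgroup (G i)) (w : NormalWord d) : Prop :=
  w.head ∈ KH ∧ ∀ i g, ⟨i, g⟩ ∈ w.toList → g ∈ K i

theorem WordIn.localHead_mem {KH : Subgroup H} {K : ∀ i, Subgroup (G i)}
    (hK : ∀ i, ∀ h ∈ KH, φ i h ∈ K i) {w : NormalWord d} (hw : WordIn KH K w) (i : ι) :
    localHead i w ∈ K i := by
  rw [localHead_eq]
  refine mul_mem (hK i _ hw.1) ?_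
  rw [CoprodI.Word.equivPair_head]
  split_ifs with h
  · obtain ⟨h2, rfl⟩ := h
    exact hw.2 _ _ (List.head_mem h2)
  · exact one_mem _

theorem WordIn.of_smul {KH : Subgroup H} {K : ∀ i, Subgroup (G i)}
    (hK : ∀ i, ∀ h ∈ KH, φ i h ∈ K i)
    (hdec : ∀ i h t, t ∈ d.set i → φ i h * t ∈ K i → h ∈ KH ∧ t ∈ K i)
    {w : NormalWord d} (hw : WordIn KH K w) (i : ι) (g : G i) (hg : g ∈ K i) :
    WordIn KH K (of (φ := φ) i g • w) := by
  rw [summand_smul_def]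
  change WordIn KH K (NormalWord.rcons i _)
  unfold NormalWord.rcons
  have h1 : g * (NormalWord.equivPair i w).head ∈ K i := mul_mem hg (hw.localHead_mem hK i)
  have h2 := hdec i ((MonoidHom.ofInjective (d.injective i)).symm
    ((d.compl i).equiv (g * (NormalWord.equivPair i w).head)).1)
    ((d.compl i).equiv (g * (NormalWord.equivPair i w).head)).2 (Subtype.coe_prop _) (by
      rw [MonoidHom.apply_ofInjective_symm, Subgroup.IsComplement.equiv_fst_mul_equiv_snd]
      exact h1)
  refine ⟨h2.1, ?_⟩
  intro j t ht
  simp only at ht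
  rw [CoprodI.Word.equivPair_symm, CoprodI.Word.mem_rcons_iff] at ht
  rcases ht with ht | ⟨-, rfl, rfl⟩
  · have h3 : CoprodI.Word.Pair.tail (NormalWord.equivPair i w).toPair =
      (CoprodI.Word.equivPair i w.toWord).tail := by
      unfold NormalWord.equivPair
      simp only [Equiv.coe_fn_mk]
      rw [CoprodI.Word.equivPair_smul_same]
    rw [h3] at ht
    exact hw.2 _ _ (CoprodI.Word.mem_of_mem_equivPair_tail _ ht)
  · exact h2.2

end NormalForm

section Gate

variable {V : Type*} (Γ : LabeledGraph V) {I : Type*} (c : I → V)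

/-- The homomorphism from the free group on an independent family of vertices. -/
def freeToArtin : FreeGroup I →* ArtinGroup Γ := FreeGroup.lift fun a => artinGen Γ (c a)

/-- No vertex of the family is the first letter of a geodesic for `t`. -/
def IsGate (t : ArtinGroup Γ) : Prop := ∀ a ε, ¬ IsFirst Γ (c a, ε) t

theorem freeToArtin_mk_cons (x : I × Bool) (L : List (I × Bool)) :
    freeToArtin Γ c (FreeGroup.mk (x :: L)) =
      artinLetter Γ (c x.1, x.2) * freeToArtin Γ c (FreeGroup.mk L) := by
  rw [← List.singleton_append, ← FreeGroup.mul_mk, map_mul]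
  congr 1
  rcases x with ⟨a, _ | _⟩ <;> simp [freeToArtin]

theorem freeToArtin_of (a : I) : freeToArtin Γ c (FreeGroup.of a) = artinGen Γ (c a) := by
  simp [freeToArtin]

theorem isGate_one : IsGate Γ c 1 := fun _ _ => not_isFirst_one Γ _

variable {Γ c}

theorem exists_gate (g : ArtinGroup Γ) : ∃ w t, IsGate Γ c t ∧ g = freeToArtin Γ c w * t := by
  induction hn : artinLen Γ g using Nat.strong_induction_on generalizing g with
  | _ n ih =>
    by_cases hg : IsGate Γ c g
    · exact ⟨1, g, hg, by simp⟩
    · unfold IsGate at hg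
      push Not at hg
      obtain ⟨a, ε, h⟩ := hg
      obtain ⟨w, t, ht, hwt⟩ := ih _ (by rw [← hn]; exact h)
        ((artinLetter Γ (c a, ε))⁻¹ * g) rfl
      refine ⟨FreeGroup.mk [(a, ε)] * w, t, ht, ?_⟩
      rw [map_mul, mul_assoc, ← hwt, freeToArtin_mk_cons]
      change _ = artinLetter Γ (c a, ε) * freeToArtin Γ c 1 * _
      simp

variable (hgood : GoodLen Γ) (hc : Function.Injective c) (hind : ∀ a b, ¬ Γ.graph.Adj (c a) (c b))
include hgood hc hind

theorem artinLen_free_mul_gate [DecidableEq I] (w : FreeGroup I) {t : ArtinGroup Γ}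
    (ht : IsGate Γ c t) :
    artinLen Γ (freeToArtin Γ c w * t) = w.norm + artinLen Γ t := by
  have hle : ∀ L : List (I × Bool),
      artinLen Γ (freeToArtin Γ c (FreeGroup.mk L) * t) ≤ L.length + artinLen Γ t := by
    intro L
    induction L with
    | nil => simp [← FreeGroup.one_eq_mk]
    | cons x L ih =>
      rw [freeToArtin_mk_cons, mul_assoc, List.length_cons]
      have := artinLen_letter_mul_le Γ (c x.1, x.2) (freeToArtin Γ c (FreeGroup.mk L) * t)
      omega
  have key : ∀ L : List (I × Bool), FreeGroup.IsReduced L →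
      artinLen Γ (freeToArtin Γ c (FreeGroup.mk L) * t) = L.length + artinLen Γ t := by
    intro L
    induction L with
    | nil => intro _; simp [← FreeGroup.one_eq_mk]
    | cons x L ih =>
      intro hL
      have hL' : FreeGroup.IsReduced L := hL.infix ⟨[x], [], by simp⟩
      have ih' := ih hL'
      rw [freeToArtin_mk_cons, mul_assoc]
      have hx : ¬ IsFirst Γ (c x.1, !x.2) (freeToArtin Γ c (FreeGroup.mk L) * t) := by
        intro hfirst
        rcases L with _ | ⟨y, L⟩
        · rw [← FreeGroup.one_eq_mk, map_one, one_mul] at hfirst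
          exact ht _ _ hfirst
        · have hy : IsFirst Γ (c y.1, y.2) (freeToArtin Γ c (FreeGroup.mk (y :: L)) * t) := by
            unfold IsFirst
            rw [ih', freeToArtin_mk_cons, mul_assoc, inv_mul_cancel_left, List.length_cons]
            have := hle L
            omega
          by_cases hxy : (c x.1, !x.2) = (c y.1, y.2)
          · have h1 := hc (congrArg Prod.fst hxy)
            have h2 : (!x.2) = y.2 := congrArg Prod.snd hxy
            have h3 : x.1 = y.1 → x.2 = y.2 := by
              have := hL
              unfold FreeGroup.IsReduced at this
              rw [List.isChain_cons_cons] at this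
              exact this.1
            rw [← h3 h1] at h2
            simp at h2
          · exact hind _ _ (hgood.adj hfirst hy hxy)
      have := not_isFirst Γ hx
      rw [artinLetter_not Γ (c x.1, x.2), inv_inv] at this
      rw [this, ih', List.length_cons]
      omega
  have := key w.toWord FreeGroup.isReduced_toWord
  rwa [FreeGroup.mk_toWord] at this

end Gate

section Gate

variable {V : Type*} {Γ : LabeledGraph V} {I : Type*} {c : I → V}
variable (hgood : GoodLen Γ) (hc : Function.Injective c) (hind : ∀ a b, ¬ Γ.graph.Adj (c a) (c b))
include hgood hc hind

theorem gate_unique {w w' : FreeGroup I} {t t' : ArtinGroup Γ} (ht : IsGate Γ c t)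
    (ht' : IsGate Γ c t') (h : freeToArtin Γ c w * t = freeToArtin Γ c w' * t') :
    w = w' ∧ t = t' := by
  classical
  have h1 : freeToArtin Γ c (w'⁻¹ * w) * t = t' := by
    rw [map_mul, map_inv, mul_assoc, h, inv_mul_cancel_left]
  have h2 : freeToArtin Γ c (w⁻¹ * w') * t' = t := by
    rw [map_mul, map_inv, mul_assoc, ← h, inv_mul_cancel_left]
  have h3 := artinLen_free_mul_gate hgood hc hind (w'⁻¹ * w) ht
  have h4 := artinLen_free_mul_gate hgood hc hind (w⁻¹ * w') ht'
  rw [h1] at h3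
  rw [h2] at h4
  have h5 : (w'⁻¹ * w).norm = 0 := by omega
  rw [FreeGroup.norm_eq_zero, inv_mul_eq_one] at h5
  subst h5
  exact ⟨rfl, mul_left_cancel h⟩

theorem freeToArtin_injective : Function.Injective (freeToArtin Γ c) := fun w w' h =>
  (gate_unique hgood hc hind (isGate_one Γ c) (isGate_one Γ c) (by rw [h])).1

theorem gate_isComplement :
    Subgroup.IsComplement ((freeToArtin Γ c).range : Set (ArtinGroup Γ)) {t | IsGate Γ c t} := by
  constructor
  · rintro ⟨⟨_, w, rfl⟩, t, ht⟩ ⟨⟨_, w', rfl⟩, t', ht'⟩ h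
    obtain ⟨rfl, rfl⟩ := gate_unique hgood hc hind ht ht' h
    rfl
  · intro g
    obtain ⟨w, t, ht, rfl⟩ := exists_gate (Γ := Γ) (c := c) g
    exact ⟨(⟨_, w, rfl⟩, ⟨t, ht⟩), rfl⟩

omit hc hind in
theorem exists_gate_mem {J : Set V} {g : ArtinGroup Γ} (hg : g ∈ standardSubgroup Γ J) :
    ∃ w t, IsGate Γ c t ∧ g = freeToArtin Γ c w * t ∧ t ∈ standardSubgroup Γ J ∧
      w ∈ Subgroup.closure (FreeGroup.of '' (c ⁻¹' J)) := by
  induction hn : artinLen Γ g using Nat.strong_induction_on generalizing g with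
  | _ n ih =>
    by_cases hgate : IsGate Γ c g
    · exact ⟨1, g, hgate, by simp, hg, one_mem _⟩
    · unfold IsGate at hgate
      push Not at hgate
      obtain ⟨a, ε, h⟩ := hgate
      have ha : c a ∈ J := hgood.parabolic hg h
      have hlet : artinLetter Γ (c a, ε) ∈ standardSubgroup Γ J := by
        have : artinGen Γ (c a) ∈ standardSubgroup Γ J :=
          Subgroup.subset_closure ⟨_, ha, rfl⟩
        cases ε
        · simpa using this
        · simpa using this
      obtain ⟨w, t, ht, hwt, h1, h2⟩ := ih _ (by rw [← hn]; exact h)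
        (mul_mem (inv_mem hlet) hg) rfl
      refine ⟨FreeGroup.mk [(a, ε)] * w, t, ht, ?_, h1, mul_mem ?_ h2⟩
      · rw [map_mul, mul_assoc, ← hwt, freeToArtin_mk_cons]
        change _ = artinLetter Γ (c a, ε) * freeToArtin Γ c 1 * _
        simp
      · have : FreeGroup.of a ∈ Subgroup.closure (FreeGroup.of '' (c ⁻¹' J)) :=
          Subgroup.subset_closure ⟨a, ha, rfl⟩
        cases ε
        · exact inv_mem this
        · exact this

theorem gate_mem {J : Set V} {w : FreeGroup I} {t : ArtinGroup Γ} (ht : IsGate Γ c t)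
    (h : freeToArtin Γ c w * t ∈ standardSubgroup Γ J) :
    w ∈ Subgroup.closure (FreeGroup.of '' (c ⁻¹' J)) ∧ t ∈ standardSubgroup Γ J := by
  obtain ⟨w', t', ht', hwt, h1, h2⟩ := exists_gate_mem (c := c) hgood h
  obtain ⟨rfl, rfl⟩ := gate_unique hgood hc hind ht ht' hwt
  exact ⟨h2, h1⟩

end Gate

theorem freeToArtin_mem {V : Type*} {Γ : LabeledGraph V} {I : Type*} {c : I → V} {J : Set V}
    {w : FreeGroup I} (hw : w ∈ Subgroup.closure (FreeGroup.of '' (c ⁻¹' J))) :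
    freeToArtin Γ c w ∈ standardSubgroup Γ J := by
  have : Subgroup.closure (FreeGroup.of '' (c ⁻¹' J)) ≤
      (standardSubgroup Γ J).comap (freeToArtin Γ c) := by
    rw [Subgroup.closure_le]
    rintro _ ⟨a, ha, rfl⟩
    change freeToArtin Γ c _ ∈ standardSubgroup Γ J
    rw [freeToArtin_of]
    exact Subgroup.subset_closure ⟨_, ha, rfl⟩
  exact this hw

section Splitting

open Monoid Monoid.PushoutI Monoid.PushoutI.NormalWord
open scoped Classical

/-- The full labeled subgraph on a set of vertices. -/
def LabeledGraph.induce {V : Type*} (Γ : LabeledGraph V) (S : Set V) : LabeledGraph S where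
  graph := Γ.graph.induce S
  label a b := Γ.label a b
  label_symm a b := Γ.label_symm a b
  two_le_label _ _ h := Γ.two_le_label h

/-- The homomorphism of Artin groups induced by the inclusion of a full subgraph. -/
def artinInclude {V : Type*} (Γ : LabeledGraph V) (S : Set V) :
    ArtinGroup (Γ.induce S) →* ArtinGroup Γ :=
  artinLift _ (fun v => artinGen Γ v) fun _ _ h => artin_relation Γ h

@[simp]
theorem artinInclude_gen {V : Type*} (Γ : LabeledGraph V) (S : Set V) (v : S) :
    artinInclude Γ S (artinGen (Γ.induce S) v) = artinGen Γ v :=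
  artinLift_gen _ _ _ v

theorem artinInclude_letter {V : Type*} (Γ : LabeledGraph V) (S : Set V) (v : S) (ε : Bool) :
    artinInclude Γ S (artinLetter (Γ.induce S) (v, ε)) = artinLetter Γ (v, ε) := by
  cases ε <;> simp

/-- A covering of a labeled graph by full subgraphs, pairwise meeting inside a common
set `I` spanning no edge. -/
structure Splitting {V : Type*} (Γ : LabeledGraph V) (ι : Type*) where
  S : ι → Set V
  I : Set V
  subset : ∀ i, I ⊆ S i
  inter_subset : ∀ ⦃i j⦄, i ≠ j → S i ∩ S j ⊆ I
  edge : ∀ ⦃a b⦄, Γ.graph.Adj a b → ∃ i, a ∈ S i ∧ b ∈ S i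
  cover : ∀ v, ∃ i, v ∈ S i
  indep : ∀ a ∈ I, ∀ b ∈ I, ¬ Γ.graph.Adj a b
  good : ∀ i, GoodLen (Γ.induce (S i))

namespace Splitting

variable {V ι : Type*} {Γ : LabeledGraph V} (P : Splitting Γ ι)

/-- The inclusion of the common part into a piece. -/
def incl (i : ι) (a : P.I) : P.S i := ⟨a, P.subset i a.2⟩

/-- The homomorphisms along which the Artin groups of the pieces are amalgamated. -/
def glue (i : ι) : FreeGroup P.I →* ArtinGroup (Γ.induce (P.S i)) :=
  freeToArtin _ (P.incl i)

theorem incl_injective (i : ι) : Function.Injective (P.incl i) := fun _ _ h =>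
  Subtype.ext (congrArg (fun x : P.S i => (x : V)) h)

theorem incl_indep (i : ι) (a b : P.I) :
    ¬ (Γ.induce (P.S i)).graph.Adj (P.incl i a) (P.incl i b) :=
  P.indep a a.2 b b.2

/-- The transversals consisting of gates. -/
def transversal : Transversal P.glue where
  injective i := freeToArtin_injective (P.good i) (P.incl_injective i) (P.incl_indep i)
  set i := {t | IsGate _ (P.incl i) t}
  one_mem _ := isGate_one _ _
  compl i := gate_isComplement (P.good i) (P.incl_injective i) (P.incl_indep i)

theorem of_gen_eq {v : V} {i j : ι} (hi : v ∈ P.S i) (hj : v ∈ P.S j) :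
    of (φ := P.glue) i (artinGen (Γ.induce (P.S i)) ⟨v, hi⟩) =
      of (φ := P.glue) j (artinGen (Γ.induce (P.S j)) ⟨v, hj⟩) := by
  by_cases hij : i = j
  · subst hij
    rfl
  · have hv : v ∈ P.I := P.inter_subset hij ⟨hi, hj⟩
    have key : ∀ (k : ι) (hk : v ∈ P.S k),
        of (φ := P.glue) k (artinGen (Γ.induce (P.S k)) ⟨v, hk⟩) =
          base P.glue (FreeGroup.of ⟨v, hv⟩) := by
      intro k hk
      rw [← of_apply_eq_base P.glue k]
      exact congrArg _ (freeToArtin_of (Γ.induce (P.S k)) (P.incl k) ⟨v, hv⟩).symm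
    rw [key, key]

/-- The comparison map to the amalgam. -/
noncomputable def toPushout : ArtinGroup Γ →* PushoutI P.glue :=
  artinLift Γ (fun v => of (P.cover v).choose
      (artinGen (Γ.induce (P.S (P.cover v).choose)) ⟨v, (P.cover v).choose_spec⟩)) <| by
    intro a b hab
    obtain ⟨i, ha, hb⟩ := P.edge hab
    rw [P.of_gen_eq _ ha, P.of_gen_eq _ hb, ← map_altProd, ← map_altProd]
    congr 1
    exact artin_relation (Γ.induce (P.S i)) (a := ⟨a, ha⟩) (b := ⟨b, hb⟩) hab

theorem toPushout_gen {v : V} {i : ι} (hi : v ∈ P.S i) :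
    P.toPushout (artinGen Γ v) = of i (artinGen (Γ.induce (P.S i)) ⟨v, hi⟩) := by
  unfold toPushout
  rw [artinLift_gen]
  exact P.of_gen_eq _ _

theorem toPushout_include (i : ι) (y : ArtinGroup (Γ.induce (P.S i))) :
    P.toPushout (artinInclude Γ (P.S i) y) = of i y := by
  have : P.toPushout.comp (artinInclude Γ (P.S i)) = of (φ := P.glue) i := by
    refine artin_hom_ext _ fun v => ?_
    rw [MonoidHom.comp_apply, artinInclude_gen, P.toPushout_gen v.2]
  exact DFunLike.congr_fun this y

theorem toPushout_injective : Function.Injective P.toPushout := by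
  let θ : PushoutI P.glue →* ArtinGroup Γ :=
    lift (fun i => artinInclude Γ (P.S i)) (freeToArtin Γ Subtype.val) <| by
      intro i
      refine FreeGroup.ext_hom _ _ fun a => ?_
      rw [MonoidHom.comp_apply, glue, freeToArtin_of, freeToArtin_of, artinInclude_gen]
      rfl
  have h : θ.comp P.toPushout = MonoidHom.id _ := by
    refine artin_hom_ext _ fun v => ?_
    obtain ⟨i, hi⟩ := P.cover v
    rw [MonoidHom.comp_apply, P.toPushout_gen hi, lift_of, artinInclude_gen]
    rfl
  intro x y hxy
  have := congrArg θ hxy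
  rwa [← MonoidHom.comp_apply, ← MonoidHom.comp_apply, h] at this

/-- The normal form of an element. -/
noncomputable def nf (g : ArtinGroup Γ) : NormalWord P.transversal :=
  P.toPushout g • NormalWord.empty

/-- The part of the normal form lying in one of the pieces. -/
noncomputable def headIn (i : ι) (g : ArtinGroup Γ) : ArtinGroup (Γ.induce (P.S i)) :=
  localHead i (P.nf g)

/-- The length of the remaining part of the normal form. -/
noncomputable def restLen (i : ι) (g : ArtinGroup Γ) : ℕ :=
  localRest (fun i => artinLen (Γ.induce (P.S i))) i (P.nf g)

theorem nf_include_mul (i : ι) (y : ArtinGroup (Γ.induce (P.S i))) (g : ArtinGroup Γ) :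
    P.nf (artinInclude Γ (P.S i) y * g) = of (φ := P.glue) i y • P.nf g := by
  rw [nf, map_mul, toPushout_include, mul_smul]
  rfl

theorem gate_len (i : ι) (h : FreeGroup P.I) (t : ArtinGroup (Γ.induce (P.S i)))
    (ht : t ∈ P.transversal.set i) :
    artinLen (Γ.induce (P.S i)) (P.glue i h * t) = h.norm + artinLen (Γ.induce (P.S i)) t :=
  artinLen_free_mul_gate (P.good i) (P.incl_injective i) (P.incl_indep i) h ht

/-- The length computed from the normal form. -/
noncomputable def nfLen (g : ArtinGroup Γ) : ℕ :=
  normalLen FreeGroup.norm (fun i => artinLen (Γ.induce (P.S i))) (P.nf g)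

theorem nfLen_include_mul (i : ι) (y : ArtinGroup (Γ.induce (P.S i))) (g : ArtinGroup Γ) :
    P.nfLen (artinInclude Γ (P.S i) y * g) =
      artinLen (Γ.induce (P.S i)) (y * P.headIn i g) + P.restLen i g := by
  rw [nfLen, nf_include_mul, normalLen_of_smul _ _ (fun i => artinLen_one _) P.gate_len]
  rfl

theorem nfLen_eq (i : ι) (g : ArtinGroup Γ) :
    P.nfLen g = artinLen (Γ.induce (P.S i)) (P.headIn i g) + P.restLen i g := by
  simpa using P.nfLen_include_mul i 1 g

theorem eq_one_of_headIn [Nonempty ι] {g : ArtinGroup Γ} (h : ∀ i, P.headIn i g = 1) : g = 1 := by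
  have h1 := eq_empty_of_localHead FreeGroup.norm (fun i => artinLen (Γ.induce (P.S i)))
    (fun i => artinLen_one _) P.gate_len (fun i g => eq_one_of_artinLen_eq_zero _) (P.nf g) h
  have h2 := congrArg NormalWord.prod h1
  rw [nf, NormalWord.prod_smul, NormalWord.prod_empty, mul_one] at h2
  exact P.toPushout_injective (by rw [h2, map_one])

theorem artinLen_eq_nfLen [Nonempty ι] (g : ArtinGroup Γ) : artinLen Γ g = P.nfLen g := by
  refine artinLen_unique Γ P.nfLen ?_ ?_ ?_ ?_ g
  · simp [nfLen, nf, normalLen, NormalWord.empty, wordLenSum, CoprodI.Word.empty]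
  · rintro ⟨v, ε⟩ g
    obtain ⟨i, hi⟩ := P.cover v
    rw [← artinInclude_letter Γ (P.S i) ⟨v, hi⟩ ε, nfLen_include_mul, P.nfLen_eq i g]
    have := artinLen_letter_mul_le (Γ.induce (P.S i)) (⟨v, hi⟩, ε) (P.headIn i g)
    omega
  · intro g hg
    have : ∃ i, P.headIn i g ≠ 1 := by
      by_contra! hcon
      apply hg
      obtain ⟨i⟩ := ‹Nonempty ι›
      have h1 := P.eq_one_of_headIn hcon
      subst h1
      simp [nfLen, nf, normalLen, NormalWord.empty, wordLenSum, CoprodI.Word.empty]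
    obtain ⟨i, hi⟩ := this
    obtain ⟨⟨v, ε⟩, hx⟩ := exists_isFirst (Γ.induce (P.S i)) hi
    refine ⟨(v, !ε), ?_⟩
    rw [← artinInclude_letter, nfLen_include_mul, P.nfLen_eq i g]
    have h2 := artinLetter_not (Γ.induce (P.S i)) (v, ε)
    simp only at h2
    rw [h2]
    have : _ < _ := hx
    omega
  · intro g hg
    refine P.eq_one_of_headIn fun i => eq_one_of_artinLen_eq_zero _ ?_
    have := P.nfLen_eq i g
    omega

variable [Nonempty ι]

theorem artinLen_include_mul (i : ι) (y : ArtinGroup (Γ.induce (P.S i))) (g : ArtinGroup Γ) :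
    artinLen Γ (artinInclude Γ (P.S i) y * g) =
      artinLen (Γ.induce (P.S i)) (y * P.headIn i g) + P.restLen i g := by
  rw [P.artinLen_eq_nfLen, P.nfLen_include_mul]

theorem artinLen_eq (i : ι) (g : ArtinGroup Γ) :
    artinLen Γ g = artinLen (Γ.induce (P.S i)) (P.headIn i g) + P.restLen i g := by
  rw [P.artinLen_eq_nfLen, P.nfLen_eq i]

theorem artinLen_include (i : ι) (y : ArtinGroup (Γ.induce (P.S i))) :
    artinLen Γ (artinInclude Γ (P.S i) y) = artinLen (Γ.induce (P.S i)) y := by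
  have h1 := P.artinLen_eq i 1
  rw [artinLen_one] at h1
  have h2 := P.artinLen_include_mul i y 1
  have h3 : P.headIn i 1 = 1 := eq_one_of_artinLen_eq_zero _ (by omega)
  rw [h3, mul_one, mul_one] at h2
  omega

theorem isFirst_iff {i : ι} {v : V} (hv : v ∈ P.S i) (ε : Bool) (g : ArtinGroup Γ) :
    IsFirst Γ (v, ε) g ↔ IsFirst (Γ.induce (P.S i)) (⟨v, hv⟩, ε) (P.headIn i g) := by
  unfold IsFirst
  rw [← artinInclude_letter Γ (P.S i) ⟨v, hv⟩ ε, ← map_inv, P.artinLen_include_mul,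
    P.artinLen_eq i g]
  omega

theorem exists_isFirst_mem (g : ArtinGroup Γ) :
    ∃ i, ∀ x, IsFirst Γ x g → x.1 ∈ P.S i := by
  obtain ⟨i, hi⟩ := exists_localHead_mem_range (P.nf g)
  refine ⟨i, ?_⟩
  rintro ⟨v, ε⟩ hx
  obtain ⟨j, hj⟩ := P.cover v
  by_cases hij : j = i
  · subst hij
    exact hj
  · obtain ⟨w, hw⟩ := hi j hij
    rw [P.isFirst_iff hj] at hx
    have h1 : P.headIn j g ∈ standardSubgroup (Γ.induce (P.S j)) (Set.range (P.incl j)) := by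
      rw [headIn, ← hw]
      refine freeToArtin_mem ?_
      have : P.incl j ⁻¹' Set.range (P.incl j) = Set.univ := by ext; simp
      rw [this, Set.image_univ, FreeGroup.closure_range_of]
      trivial
    obtain ⟨a, ha⟩ := (P.good j).parabolic h1 hx
    have h2 : (a : V) = v := congrArg (fun x : P.S j => (x : V)) ha
    exact P.subset i (h2 ▸ a.2)

include P in
theorem mem_of_isFirst {J : Set V} {v : V} {ε : Bool} {h : ArtinGroup Γ}
    (hh : h ∈ standardSubgroup Γ J) (hx : IsFirst Γ (v, ε) h) : v ∈ J := by
  obtain ⟨i, hi⟩ := P.cover v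
  rw [P.isFirst_iff hi] at hx
  let K : ∀ i, Subgroup (ArtinGroup (Γ.induce (P.S i))) := fun i =>
    standardSubgroup (Γ.induce (P.S i)) (Subtype.val ⁻¹' J)
  let KH : Subgroup (FreeGroup P.I) :=
    Subgroup.closure (FreeGroup.of '' ((fun a : P.I => (a : V)) ⁻¹' J))
  have hK : ∀ i, ∀ h ∈ KH, P.glue i h ∈ K i := fun i h hh => freeToArtin_mem hh
  have hdec : ∀ i h t, t ∈ P.transversal.set i → P.glue i h * t ∈ K i → h ∈ KH ∧ t ∈ K i :=
    fun i h t ht hmem => gate_mem (J := Subtype.val ⁻¹' J) (P.good i) (P.incl_injective i) (P.incl_indep i)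
      ht hmem
  have key : ∀ g ∈ standardSubgroup Γ J, WordIn KH K (P.nf g) := by
    have hstep : ∀ (u : V) (hu : u ∈ J) (ε : Bool) (g : ArtinGroup Γ),
        WordIn KH K (P.nf g) → WordIn KH K (P.nf (artinLetter Γ (u, ε) * g)) := by
      intro u hu ε g hg
      obtain ⟨j, hj⟩ := P.cover u
      rw [← artinInclude_letter Γ (P.S j) ⟨u, hj⟩ ε, nf_include_mul]
      refine hg.of_smul hK hdec _ _ ?_
      have : artinGen (Γ.induce (P.S j)) ⟨u, hj⟩ ∈ K j := Subgroup.subset_closure ⟨_, hu, rfl⟩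
      cases ε
      · simpa using this
      · simpa using this
    intro g hg
    induction hg using Subgroup.closure_induction_left with
    | one =>
      rw [nf, map_one, one_smul]
      refine ⟨one_mem _, ?_⟩
      simp [NormalWord.empty, CoprodI.Word.empty]
    | mul_left x hx y hy ih =>
      obtain ⟨u, hu, rfl⟩ := hx
      simpa using hstep u hu true y ih
    | inv_mul_cancel x hx y hy ih =>
      obtain ⟨u, hu, rfl⟩ := hx
      simpa using hstep u hu false y ih
  exact (P.good i).parabolic (I := Subtype.val ⁻¹' J) ((key h hh).localHead_mem hK i) hx

include P in
theorem goodLen : GoodLen Γ where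
  adj := by
    rintro ⟨a, ε⟩ ⟨b, δ⟩ g hx hy hxy
    obtain ⟨i, hi⟩ := P.exists_isFirst_mem g
    have ha := hi _ hx
    have hb := hi _ hy
    rw [P.isFirst_iff ha] at hx
    rw [P.isFirst_iff hb] at hy
    exact (P.good i).adj hx hy fun h => hxy (by
      rw [Prod.mk.injEq, Subtype.mk.injEq] at h
      rw [Prod.mk.injEq]
      exact h)
  label_le := by
    rintro ⟨a, ε⟩ ⟨b, δ⟩ g hx hy hxy
    obtain ⟨i, hi⟩ := P.exists_isFirst_mem g
    have ha := hi _ hx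
    have hb := hi _ hy
    rw [P.isFirst_iff ha] at hx
    rw [P.isFirst_iff hb] at hy
    have h1 := (P.good i).label_le hx hy fun h => hxy (by
      rw [Prod.mk.injEq, Subtype.mk.injEq] at h
      rw [Prod.mk.injEq]
      exact h)
    rw [P.artinLen_eq i g]
    exact h1.trans (Nat.le_add_right _ _)
  delta := by
    intro a b g hadj hx hy hlen
    obtain ⟨i, hi⟩ := P.exists_isFirst_mem g
    have ha := hi _ hx
    have hb := hi _ hy
    rw [P.isFirst_iff ha] at hx
    rw [P.isFirst_iff hb] at hy
    have h1 := (P.good i).label_le hx hy fun h => hadj.ne (by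
      rw [Prod.mk.injEq, Subtype.mk.injEq] at h
      exact h.1)
    have h2 : Γ.label a b ≤ artinLen (Γ.induce (P.S i)) (P.headIn i g) := h1
    have h3 := P.artinLen_eq i g
    have h4 := (P.good i).delta (a := ⟨a, ha⟩) (b := ⟨b, hb⟩) hadj hx hy (by
      change _ = Γ.label a b
      omega)
    have h5 := P.artinLen_include_mul i (P.headIn i g)⁻¹ g
    rw [inv_mul_cancel, artinLen_one] at h5
    have h6 := eq_one_of_artinLen_eq_zero Γ (h5.trans (by omega))
    rw [map_inv, inv_mul_eq_one] at h6
    rw [← h6, h4]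
    unfold artinDelta
    rw [map_altProd, artinInclude_gen, artinInclude_gen]
    rfl
  twist := by
    intro a b hadj
    obtain ⟨i, ha, hb⟩ := P.edge hadj
    have h1 := (P.good i).twist (a := ⟨a, ha⟩) (b := ⟨b, hb⟩) hadj
    rw [← P.artinLen_include, map_mul, map_inv, map_altProd, artinInclude_gen,
      artinInclude_gen] at h1
    exact h1
  parabolic J x h hh hx := P.mem_of_isFirst hh hx

end Splitting

end Splitting

section Induction

theorem goodLen_subsingleton {V : Type*} [Subsingleton V] (Γ : LabeledGraph V) : GoodLen Γ := by
  have hexp : ∀ x g, Multiplicative.toAdd (artinExp Γ (artinLetter Γ x * g)) =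
      (if x.2 then 1 else -1) + Multiplicative.toAdd (artinExp Γ g) := by
    intro x g
    rw [map_mul, toAdd_mul, artinExp_letter]
  have hpow : ∀ (v : V) (g : ArtinGroup Γ),
      g = artinGen Γ v ^ Multiplicative.toAdd (artinExp Γ g) := by
    intro v g
    induction g using artin_induction Γ with
    | one => simp
    | mul x g ih =>
      obtain ⟨a, ε⟩ := x
      obtain rfl := Subsingleton.elim v a
      rw [hexp, zpow_add, ← ih]
      cases ε <;> simp
  have hlen : ∀ g, artinLen Γ g = (Multiplicative.toAdd (artinExp Γ g)).natAbs := by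
    intro g
    refine artinLen_unique Γ (fun g => (Multiplicative.toAdd (artinExp Γ g)).natAbs) ?_ ?_ ?_ ?_ g
    · simp
    · intro x g
      simp only [hexp]
      split_ifs <;> omega
    · intro g hg
      have h1 : g ≠ 1 := by
        rintro rfl
        simp at hg
      obtain ⟨⟨v, -⟩, -⟩ := exists_isFirst Γ h1
      simp only [hexp]
      rcases lt_or_ge 0 (Multiplicative.toAdd (artinExp Γ g)) with h | h
      · refine ⟨(v, false), ?_⟩
        simp only [Bool.false_eq_true, if_false]
        omega
      · refine ⟨(v, true), ?_⟩
        simp only [if_true]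
        omega
    · intro g hg
      by_contra h1
      obtain ⟨⟨v, -⟩, -⟩ := exists_isFirst Γ h1
      apply h1
      rw [hpow v g, Int.natAbs_eq_zero.mp hg, zpow_zero]
  have huniq : ∀ {x y g}, IsFirst Γ x g → IsFirst Γ y g → x = y := by
    rintro ⟨a, ε⟩ ⟨b, δ⟩ g hx hy
    obtain rfl := Subsingleton.elim a b
    unfold IsFirst at hx hy
    rw [← artinLetter_not, hlen, hlen, hexp] at hx hy
    cases ε <;> cases δ <;> simp at hx hy ⊢ <;> omega
  refine ⟨fun x y g hx hy h => absurd (huniq hx hy) h, fun x y g hx hy h => absurd (huniq hx hy) h,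
    fun a b g h => absurd (Subsingleton.elim a b) h.ne,
    fun a b h => absurd (Subsingleton.elim a b) h.ne, ?_⟩
  intro I x h hh hx
  by_contra hI
  have hempty : I = ∅ := Set.eq_empty_of_forall_notMem fun a ha =>
    hI (Subsingleton.elim a x.1 ▸ ha)
  subst hempty
  unfold standardSubgroup at hh
  rw [Set.image_empty, Subgroup.closure_empty, Subgroup.mem_bot] at hh
  subst hh
  exact not_isFirst_one Γ x hx

/-- The splitting of a triangle-free labeled graph along the link of a vertex. -/
def linkSplitting {V : Type*} {Γ : LabeledGraph V} (v : V)
    (htri : ∀ a b c, Γ.graph.Adj a b → Γ.graph.Adj b c → ¬ Γ.graph.Adj a c)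
    (h1 : GoodLen (Γ.induce {x | x ≠ v})) (h2 : GoodLen (Γ.induce {x | x = v ∨ Γ.graph.Adj v x})) :
    Splitting Γ Bool where
  S i := match i with
    | true => {x | x ≠ v}
    | false => {x | x = v ∨ Γ.graph.Adj v x}
  I := {x | Γ.graph.Adj v x}
  subset i x hx := match i with
    | true => hx.ne.symm
    | false => Or.inr hx
  inter_subset i j hij := by
    rintro x ⟨h3, h4⟩
    cases i <;> cases j
    · exact absurd rfl hij
    · exact h3.resolve_left h4
    · exact h4.resolve_left h3
    · exact absurd rfl hij
  edge a b hab := by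
    by_cases ha : a = v
    · subst ha
      exact ⟨false, Or.inl rfl, Or.inr hab⟩
    · by_cases hb : b = v
      · subst hb
        exact ⟨false, Or.inr hab.symm, Or.inl rfl⟩
      · exact ⟨true, ha, hb⟩
  cover x := by
    by_cases hx : x = v
    · exact ⟨false, Or.inl hx⟩
    · exact ⟨true, hx⟩
  indep a ha b hb hab := htri a v b (SimpleGraph.Adj.symm ha) hb hab
  good i := match i with
    | true => h1
    | false => h2

theorem goodLen_of_triangleFree {V : Type*} [Finite V] (Γ : LabeledGraph V)
    (htri : ∀ a b c, Γ.graph.Adj a b → Γ.graph.Adj b c → ¬ Γ.graph.Adj a c)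
    (hlarge : ∀ ⦃a b⦄, Γ.graph.Adj a b → 3 ≤ Γ.label a b) : GoodLen Γ := by
  induction hn : Nat.card V using Nat.strong_induction_on generalizing V with
  | _ n ih =>
    have hind : ∀ S : Set V, (∃ w, w ∉ S) → GoodLen (Γ.induce S) := by
      rintro S ⟨w, hw⟩
      refine ih (Nat.card S) ?_ (Γ.induce S) (fun a b c => htri a b c)
        (fun a b h => hlarge h) rfl
      rw [← hn, Nat.card_coe_set_eq, ← Set.ncard_univ]
      exact Set.ncard_lt_ncard (Set.ssubset_univ_iff.mpr fun h => hw (h ▸ Set.mem_univ w))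
    by_cases hex : ∃ v w, w ≠ v ∧ ¬ Γ.graph.Adj v w
    · obtain ⟨v, w, hwv, hvw⟩ := hex
      exact (linkSplitting v htri (hind _ ⟨v, fun h => h rfl⟩)
        (hind _ ⟨w, fun h => h.elim hwv hvw⟩)).goodLen
    · push Not at hex
      rcases subsingleton_or_nontrivial V with hV | hV
      · exact goodLen_subsingleton Γ
      · obtain ⟨a, b, hab⟩ := exists_pair_ne V
        have hadj := hex b a hab
        have hbij : Function.Bijective (fun x : Bool => if x then a else b) := by
          constructor
          · intro x y
            cases x <;> cases y <;> simp [hab, hab.symm]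
          · intro c
            by_cases hc : c = a
            · exact ⟨true, by simp [hc]⟩
            · by_cases hc' : c = b
              · exact ⟨false, by simp [hc']⟩
              · exact absurd (hex b c hc') (htri b a c hadj (hex a c hc))
        exact goodLen_dihedral Γ (Equiv.ofBijective _ hbij) hadj.symm (hlarge hadj.symm)

end Induction

section EdgeElements

theorem altProd_add {G : Type*} [Monoid G] (k l : ℕ) (x y : G) :
    altProd (k + l) x y =
      altProd k x y * altProd l (if k.bodd then y else x) (if k.bodd then x else y) := by
  induction k generalizing x y with
  | zero => simp [altProd]
  | succ k ih =>
    rw [Nat.succ_add_eq_add_succ, Nat.add_succ, altProd, ih, altProd, mul_assoc, Nat.bodd_succ]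
    cases k.bodd <;> simp

variable {V : Type*} {Γ : LabeledGraph V}

theorem artinExp_altProd (n : ℕ) (a b : V) :
    (artinExp Γ (altProd n (artinGen Γ a) (artinGen Γ b))).toAdd = n := by
  induction n generalizing a b with
  | zero => simp [altProd]
  | succ n ih =>
    have h := artinExp_letter Γ (a, true)
    rw [artinLetter_true] at h
    rw [altProd, map_mul, toAdd_mul, ih, h]
    push_cast
    simp [add_comm]

theorem artinLen_altProd (n : ℕ) (a b : V) :
    artinLen Γ (altProd n (artinGen Γ a) (artinGen Γ b)) = n := by
  apply le_antisymm
  · induction n generalizing a b with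
    | zero => simp [altProd]
    | succ n ih =>
      have h := artinLen_letter_mul_le Γ (a, true) (altProd n (artinGen Γ b) (artinGen Γ a))
      have := ih b a
      rw [artinLetter_true] at h
      rw [altProd]
      omega
  · have h := artinExp_le Γ (altProd n (artinGen Γ a) (artinGen Γ b))
    rw [artinExp_altProd] at h
    simpa using h

theorem isFirst_altProd {n : ℕ} (hn : n ≠ 0) (a b : V) :
    IsFirst Γ (a, true) (altProd n (artinGen Γ a) (artinGen Γ b)) := by
  obtain ⟨n, rfl⟩ := Nat.exists_eq_succ_of_ne_zero hn
  unfold IsFirst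
  rw [artinLen_altProd, altProd, artinLetter_true, inv_mul_cancel_left, artinLen_altProd]
  omega

theorem altProd_mem (n : ℕ) (a b : V) :
    altProd n (artinGen Γ a) (artinGen Γ b) ∈ standardSubgroup Γ {a, b} := by
  induction n generalizing a b with
  | zero => exact one_mem _
  | succ n ih =>
    refine mul_mem (Subgroup.subset_closure ⟨a, by simp, rfl⟩) ?_
    rw [Set.pair_comm]
    exact ih b a

/-- There is at most one element of length the label having both letters as first letters. -/
def AtMostOne (Γ : LabeledGraph V) (x y : V × Bool) : Prop :=
  ∀ ⦃g g'⦄, IsFirst Γ x g → IsFirst Γ y g → artinLen Γ g = Γ.label x.1 y.1 →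
    IsFirst Γ x g' → IsFirst Γ y g' → artinLen Γ g' = Γ.label x.1 y.1 → g = g'

theorem AtMostOne.symm {x y : V × Bool} (h : AtMostOne Γ x y) : AtMostOne Γ y x := by
  intro g g' h1 h2 h3 h4 h5 h6
  rw [Γ.label_symm] at h3 h6
  exact h h2 h1 h3 h5 h4 h6

theorem isFirst_delta {a b : V} (h : Γ.graph.Adj a b) :
    IsFirst Γ (a, true) (artinDelta Γ a b) ∧ IsFirst Γ (b, true) (artinDelta Γ a b) := by
  have h1 := Γ.two_le_label h
  refine ⟨isFirst_altProd (by omega) a b, ?_⟩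
  unfold artinDelta
  rw [artin_relation Γ h]
  exact isFirst_altProd (by omega) b a

/-- An element having both `(a, true)` and `(b, false)` as first letters. -/
def artinTwist (Γ : LabeledGraph V) (a b : V) : ArtinGroup Γ :=
  (artinGen Γ b)⁻¹ * altProd (Γ.label a b - 1) (artinGen Γ a) (artinGen Γ b)

theorem artinExp_twist (a b : V) :
    (artinExp Γ (artinTwist Γ a b)).toAdd = (Γ.label a b - 1 : ℕ) - 1 := by
  have h := artinExp_letter Γ (b, false)
  rw [artinLetter_false] at h
  rw [artinTwist, map_mul, toAdd_mul, artinExp_altProd, h]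
  simp only [Bool.false_eq_true, if_false]
  omega

theorem artinExp_invHom (g : ArtinGroup Γ) :
    (artinExp Γ (artinInvHom Γ g)).toAdd = -(artinExp Γ g).toAdd := by
  induction g using artin_induction Γ with
  | one => simp
  | mul x g ih =>
    rw [map_mul (artinInvHom Γ), map_mul (artinExp Γ) (artinInvHom Γ _),
      map_mul (artinExp Γ) (artinLetter Γ x), toAdd_mul, toAdd_mul, ih, artinInvHom_letter, artinExp_letter,
      artinExp_letter]
    cases x.2 <;> simp <;> omega

theorem isFirst_twist (hgood : GoodLen Γ) {a b : V} (h : Γ.graph.Adj a b) :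
    IsFirst Γ (a, true) (artinTwist Γ a b) ∧ IsFirst Γ (b, false) (artinTwist Γ a b) := by
  have h0 := Γ.two_le_label h
  have h1 := hgood.twist h
  obtain ⟨n, hn⟩ : ∃ n, Γ.label a b = n + 2 := ⟨_, (Nat.sub_add_cancel h0).symm⟩
  unfold IsFirst artinTwist
  rw [h1, hn]
  simp only [Nat.add_succ_sub_one]
  constructor
  · have h2 := artin_relation Γ h
    rw [hn, altProd_succ_right] at h2
    have h3 : altProd (n + 1 + 1) (artinGen Γ b) (artinGen Γ a) =
      artinGen Γ b * altProd (n + 1) (artinGen Γ a) (artinGen Γ b) := rfl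
    rw [h3] at h2
    have h4 : (artinGen Γ b)⁻¹ * altProd (n + 1) (artinGen Γ a) (artinGen Γ b) =
        altProd (n + 1) (artinGen Γ a) (artinGen Γ b) *
          (if (n + 1).bodd then artinGen Γ b else artinGen Γ a)⁻¹ := by
      rw [inv_mul_eq_iff_eq_mul, ← mul_assoc, ← h2, mul_inv_cancel_right]
    rw [h4, altProd, artinLetter_true, mul_assoc, inv_mul_cancel_left]
    refine lt_of_le_of_lt (artinLen_mul_le Γ _ _) ?_
    rw [artinLen_altProd]
    have h5 : artinLen Γ (if (n + 1).bodd then artinGen Γ b else artinGen Γ a)⁻¹ ≤ 1 := by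
      split_ifs
      · exact artinLen_letter_le Γ (b, false)
      · exact artinLen_letter_le Γ (a, false)
    omega
  · rw [artinLetter_false, inv_inv, mul_inv_cancel_left, artinLen_altProd]
    omega

theorem exists_both_first (hgood : GoodLen Γ) {x y : V × Bool} (h : Γ.graph.Adj x.1 y.1) :
    ∃ g, IsFirst Γ x g ∧ IsFirst Γ y g ∧ artinLen Γ g = Γ.label x.1 y.1 := by
  obtain ⟨a, ε⟩ := x
  obtain ⟨b, δ⟩ := y
  have h1 := isFirst_delta h
  have h2 := isFirst_twist hgood h
  have h3 := isFirst_twist hgood (SimpleGraph.Adj.symm h)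
  cases ε <;> cases δ
  · refine ⟨artinInvHom Γ (artinDelta Γ a b), ?_⟩
    rw [isFirst_invHom, isFirst_invHom, artinLen_invHom]
    exact ⟨h1.1, h1.2, artinLen_altProd _ _ _⟩
  · refine ⟨artinTwist Γ b a, h3.2, h3.1, ?_⟩
    rw [Γ.label_symm]
    exact hgood.twist (SimpleGraph.Adj.symm h)
  · exact ⟨artinTwist Γ a b, h2.1, h2.2, hgood.twist h⟩
  · exact ⟨artinDelta Γ a b, h1.1, h1.2, artinLen_altProd _ _ _⟩

theorem atMostOne_iff (hgood : GoodLen Γ) (hlarge : ∀ ⦃a b⦄, Γ.graph.Adj a b → 3 ≤ Γ.label a b)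
    {x y : V × Bool} (h : Γ.graph.Adj x.1 y.1) : AtMostOne Γ x y ↔ x.2 = y.2 := by
  have hopp : ∀ {a b : V}, Γ.graph.Adj a b → ¬ AtMostOne Γ (a, true) (b, false) := by
    intro a b hab hone
    have h1 := isFirst_twist hgood hab
    have h2 := isFirst_twist hgood hab.symm
    have h3 := hgood.twist hab
    have h4 := hgood.twist hab.symm
    have h5 : artinTwist Γ a b = artinInvHom Γ (artinTwist Γ b a) := by
      refine hone h1.1 h1.2 h3 (isFirst_invHom Γ |>.2 h2.2) (isFirst_invHom Γ |>.2 h2.1) ?_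
      rw [artinLen_invHom, Γ.label_symm]
      exact h4
    have h6 := congrArg (fun g => (artinExp Γ g).toAdd) h5
    have h7 := hlarge hab
    simp only [artinExp_invHom, artinExp_twist] at h6
    rw [Γ.label_symm b a] at h6
    omega
  obtain ⟨a, ε⟩ := x
  obtain ⟨b, δ⟩ := y
  have hd : ∀ {g}, IsFirst Γ (a, true) g → IsFirst Γ (b, true) g →
    artinLen Γ g = Γ.label a b → g = artinDelta Γ a b := fun h1 h2 h3 => hgood.delta h h1 h2 h3
  cases ε <;> cases δ
  · refine iff_of_true ?_ rfl
    have key : ∀ {g}, IsFirst Γ (a, false) g → IsFirst Γ (b, false) g →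
        artinLen Γ g = Γ.label a b → artinInvHom Γ g = artinDelta Γ a b := fun h1 h2 h3 =>
      hd (isFirst_invHom Γ |>.2 h1) (isFirst_invHom Γ |>.2 h2) (by rwa [artinLen_invHom])
    intro g g' h1 h2 h3 h4 h5 h6
    rw [← artinInvHom_invHom Γ g, key h1 h2 h3, ← key h4 h5 h6, artinInvHom_invHom]
  · exact iff_of_false (fun h1 => hopp (SimpleGraph.Adj.symm h) h1.symm) (by simp)
  · exact iff_of_false (hopp h) (by simp)
  · refine iff_of_true ?_ rfl
    intro g g' h1 h2 h3 h4 h5 h6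
    rw [hd h1 h2 h3, hd h4 h5 h6]

theorem artinLetter_injective (hgood : GoodLen Γ) : Function.Injective (artinLetter Γ) := by
  intro x y hxy
  by_contra hne
  have h1 : IsFirst Γ x (artinLetter Γ x) := isFirst_letter Γ x
  have h2 : IsFirst Γ y (artinLetter Γ x) := by
    rw [hxy]
    exact isFirst_letter Γ y
  have h3 := hgood.label_le h1 h2 hne
  have h4 := Γ.two_le_label (hgood.adj h1 h2 hne)
  rw [artinLen_letter] at h3
  omega

end EdgeElements

section Isometry

variable {V : Type*} {Γ : LabeledGraph V}

/-- A bijective isometry of an Artin group with its word metric. -/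
structure ArtinIsom (Γ : LabeledGraph V) where
  toFun : ArtinGroup Γ → ArtinGroup Γ
  bijective : Function.Bijective toFun
  len_eq : ∀ g h, artinLen Γ ((toFun g)⁻¹ * toFun h) = artinLen Γ (g⁻¹ * h)

theorem exists_letter_of_len_eq_one {g : ArtinGroup Γ} (h : artinLen Γ g = 1) :
    ∃ x, g = artinLetter Γ x := by
  have h1 : g ≠ 1 := by
    rintro rfl
    simp at h
  obtain ⟨x, hx⟩ := exists_isFirst Γ h1
  unfold IsFirst at hx
  refine ⟨x, (inv_mul_eq_one.mp (eq_one_of_artinLen_eq_zero Γ (by omega))).symm⟩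

namespace ArtinIsom

variable (F : ArtinIsom Γ)

/-- The isometry seen from a base point. -/
def locMap (g h : ArtinGroup Γ) : ArtinGroup Γ := (F.toFun g)⁻¹ * F.toFun (g * h)

theorem toFun_mul (g h : ArtinGroup Γ) : F.toFun (g * h) = F.toFun g * F.locMap g h := by
  simp [locMap]

theorem locMap_len (g h : ArtinGroup Γ) : artinLen Γ (F.locMap g h) = artinLen Γ h := by
  rw [locMap, F.len_eq, inv_mul_cancel_left]

theorem locMap_len_inv_mul (g h k : ArtinGroup Γ) :
    artinLen Γ ((F.locMap g h)⁻¹ * F.locMap g k) = artinLen Γ (h⁻¹ * k) := by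
  have h1 : (F.locMap g h)⁻¹ * F.locMap g k = (F.toFun (g * h))⁻¹ * F.toFun (g * k) := by
    unfold locMap
    group
  rw [h1, F.len_eq]
  congr 1
  group

theorem locMap_surjective (g : ArtinGroup Γ) : Function.Surjective (F.locMap g) := by
  intro k
  obtain ⟨h, hh⟩ := F.bijective.2 (F.toFun g * k)
  refine ⟨g⁻¹ * h, ?_⟩
  rw [locMap, mul_inv_cancel_left, hh, inv_mul_cancel_left]

theorem locMap_injective (g : ArtinGroup Γ) : Function.Injective (F.locMap g) := by
  intro h k hk
  have := F.bijective.1 (mul_left_cancel hk)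
  exact mul_left_cancel this

theorem exists_step (g : ArtinGroup Γ) (x : V × Bool) :
    ∃ y, F.locMap g (artinLetter Γ x) = artinLetter Γ y :=
  exists_letter_of_len_eq_one (by rw [F.locMap_len, artinLen_letter])

/-- The action of an isometry on the letters at a base point. -/
noncomputable def step (g : ArtinGroup Γ) (x : V × Bool) : V × Bool := (F.exists_step g x).choose

theorem locMap_letter (g : ArtinGroup Γ) (x : V × Bool) :
    F.locMap g (artinLetter Γ x) = artinLetter Γ (F.step g x) := (F.exists_step g x).choose_spec

theorem toFun_mul_letter (g : ArtinGroup Γ) (x : V × Bool) :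
    F.toFun (g * artinLetter Γ x) = F.toFun g * artinLetter Γ (F.step g x) := by
  rw [toFun_mul, locMap_letter]

theorem isFirst_step_iff (g h : ArtinGroup Γ) (x : V × Bool) :
    IsFirst Γ (F.step g x) (F.locMap g h) ↔ IsFirst Γ x h := by
  unfold IsFirst
  rw [← locMap_letter, locMap_len_inv_mul, locMap_len]

variable (hgood : GoodLen Γ)
include hgood

theorem step_injective (g : ArtinGroup Γ) : Function.Injective (F.step g) := fun x y hxy =>
  artinLetter_injective hgood (F.locMap_injective g (by rw [locMap_letter, locMap_letter, hxy]))

theorem adj_step {g : ArtinGroup Γ} {x y : V × Bool} (h : Γ.graph.Adj x.1 y.1) :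
    Γ.graph.Adj (F.step g x).1 (F.step g y).1 ∧
      Γ.label (F.step g x).1 (F.step g y).1 ≤ Γ.label x.1 y.1 := by
  obtain ⟨k, h1, h2, h3⟩ := exists_both_first hgood h
  rw [← F.isFirst_step_iff g] at h1 h2
  rw [← F.locMap_len g] at h3
  have hne : F.step g x ≠ F.step g y := fun h4 =>
    h.ne (congrArg Prod.fst (F.step_injective hgood g h4))
  exact ⟨hgood.adj h1 h2 hne, h3 ▸ hgood.label_le h1 h2 hne⟩

theorem adj_of_step {g : ArtinGroup Γ} {x y : V × Bool}
    (h : Γ.graph.Adj (F.step g x).1 (F.step g y).1) :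
    Γ.graph.Adj x.1 y.1 ∧ Γ.label x.1 y.1 ≤ Γ.label (F.step g x).1 (F.step g y).1 := by
  obtain ⟨k, h1, h2, h3⟩ := exists_both_first hgood h
  obtain ⟨k, rfl⟩ := F.locMap_surjective g k
  rw [F.isFirst_step_iff g] at h1 h2
  rw [F.locMap_len g] at h3
  have hne : x ≠ y := by
    rintro rfl
    exact h.ne rfl
  exact ⟨hgood.adj h1 h2 hne, h3 ▸ hgood.label_le h1 h2 hne⟩

theorem adj_step_iff {g : ArtinGroup Γ} {x y : V × Bool} :
    Γ.graph.Adj (F.step g x).1 (F.step g y).1 ↔ Γ.graph.Adj x.1 y.1 :=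
  ⟨fun h => (F.adj_of_step hgood h).1, fun h => (F.adj_step hgood h).1⟩

theorem label_step {g : ArtinGroup Γ} {x y : V × Bool} (h : Γ.graph.Adj x.1 y.1) :
    Γ.label (F.step g x).1 (F.step g y).1 = Γ.label x.1 y.1 :=
  le_antisymm (F.adj_step hgood h).2 (F.adj_of_step hgood (F.adj_step hgood h).1).2

theorem atMostOne_step {g : ArtinGroup Γ} {x y : V × Bool} (h : Γ.graph.Adj x.1 y.1) :
    AtMostOne Γ (F.step g x) (F.step g y) ↔ AtMostOne Γ x y := by
  constructor
  · intro h1 k k' h2 h3 h4 h5 h6 h7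
    rw [← F.isFirst_step_iff g] at h2 h3 h5 h6
    rw [← F.locMap_len g, ← F.label_step hgood h (g := g)] at h4 h7
    exact F.locMap_injective g (h1 h2 h3 h4 h5 h6 h7)
  · intro h1 k k' h2 h3 h4 h5 h6 h7
    obtain ⟨k, rfl⟩ := F.locMap_surjective g k
    obtain ⟨k', rfl⟩ := F.locMap_surjective g k'
    rw [F.isFirst_step_iff g] at h2 h3 h5 h6
    rw [F.locMap_len g, F.label_step hgood h (g := g)] at h4 h7
    rw [h1 h2 h3 h4 h5 h6 h7]

variable (hlarge : ∀ ⦃a b⦄, Γ.graph.Adj a b → 3 ≤ Γ.label a b)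
include hlarge

theorem sign_step_iff {g : ArtinGroup Γ} {x y : V × Bool} (h : Γ.graph.Adj x.1 y.1) :
    (F.step g x).2 = (F.step g y).2 ↔ x.2 = y.2 := by
  rw [← atMostOne_iff hgood hlarge (F.adj_step hgood h).1, F.atMostOne_step hgood h,
    atMostOne_iff hgood hlarge h]

variable (hconn : Γ.graph.Connected) [Nontrivial V]
include hconn

theorem exists_sign (g : ArtinGroup Γ) : ∃ s, ∀ x, (F.step g x).2 = xor x.2 s := by
  have h1 : ∀ {a b}, Γ.graph.Adj a b → (F.step g (a, true)).2 = (F.step g (b, true)).2 :=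
    fun {a b} h => (F.sign_step_iff hgood hlarge (x := (a, true)) (y := (b, true)) h).2 rfl
  have h2 : ∀ a b, (F.step g (a, true)).2 = (F.step g (b, true)).2 := by
    intro a b
    obtain ⟨p⟩ := hconn.preconnected a b
    induction p with
    | nil => rfl
    | cons h p ih => rw [h1 h, ih]
  obtain ⟨v⟩ := hconn.nonempty
  refine ⟨!(F.step g (v, true)).2, ?_⟩
  rintro ⟨a, ε⟩
  obtain ⟨b, hb⟩ := hconn.preconnected.exists_adj_of_nontrivial a
  cases ε
  · have h3 := F.sign_step_iff hgood hlarge (g := g) (x := (a, false)) (y := (b, true)) hb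
    rw [h2 b v] at h3
    simpa [Bool.eq_not] using h3
  · rw [h2 a v]
    simp

omit hlarge hconn [Nontrivial V] in
theorem step_back (g : ArtinGroup Γ) (x : V × Bool) :
    F.step (g * artinLetter Γ x) (x.1, !x.2) = ((F.step g x).1, !(F.step g x).2) := by
  apply artinLetter_injective hgood
  rw [← F.locMap_letter, artinLetter_not, artinLetter_not, locMap, mul_inv_cancel_right,
    toFun_mul_letter, mul_inv_rev, inv_mul_cancel_right]

theorem exists_uniform_sign : ∃ s, ∀ g x, (F.step g x).2 = xor x.2 s := by
  choose s hs using F.exists_sign hgood hlarge hconn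
  obtain ⟨v⟩ := hconn.nonempty
  have h1 : ∀ g x, s (g * artinLetter Γ x) = s g := by
    intro g x
    have h2 := congrArg Prod.snd (F.step_back hgood g x)
    simp only at h2
    rw [hs, hs] at h2
    revert h2
    cases x.2 <;> cases s g <;> cases s (g * artinLetter Γ x) <;> simp
  have h2 : ∀ g h, s (h * g) = s h := by
    intro g
    induction g using artin_induction Γ with
    | one => simp
    | mul x g ih =>
      intro h
      rw [← mul_assoc, ih, h1]
  refine ⟨s 1, fun g x => ?_⟩
  rw [hs, ← h2 g 1, one_mul]

end ArtinIsom

end Isometry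

section Positive

variable {V : Type*} {Γ : LabeledGraph V}

namespace ArtinIsom

variable (F : ArtinIsom Γ)

/-- The action of an isometry on positive letters at a base point. -/
noncomputable def vmap (g : ArtinGroup Γ) (a : V) : V := (F.step g (a, true)).1

variable (hgood : GoodLen Γ) (hpos : ∀ g x, (F.step g x).2 = x.2)

include hpos in
theorem locMap_gen (g : ArtinGroup Γ) (a : V) :
    F.locMap g (artinGen Γ a) = artinGen Γ (F.vmap g a) := by
  have h := F.locMap_letter g (a, true)
  have h1 : F.step g (a, true) = (F.vmap g a, true) := Prod.ext rfl (hpos g _)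
  rwa [h1, artinLetter_true, artinLetter_true] at h

theorem locMap_mul (g h k : ArtinGroup Γ) :
    F.locMap g (h * k) = F.locMap g h * F.locMap (g * h) k := by
  unfold locMap
  group

theorem locMap_one (g : ArtinGroup Γ) : F.locMap g 1 = 1 := by
  simp [locMap]

include hgood

theorem adj_vmap {g : ArtinGroup Γ} {a b : V} :
    Γ.graph.Adj (F.vmap g a) (F.vmap g b) ↔ Γ.graph.Adj a b :=
  F.adj_step_iff hgood (x := (a, true)) (y := (b, true))

theorem label_vmap {g : ArtinGroup Γ} {a b : V} (h : Γ.graph.Adj a b) :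
    Γ.label (F.vmap g a) (F.vmap g b) = Γ.label a b :=
  F.label_step hgood (x := (a, true)) (y := (b, true)) h

include hpos

theorem vmap_injective (g : ArtinGroup Γ) : Function.Injective (F.vmap g) := by
  intro a b h
  have h1 : F.step g (a, true) = F.step g (b, true) := Prod.ext h (by rw [hpos, hpos])
  exact congrArg Prod.fst (F.step_injective hgood g h1)

theorem locMap_delta {g : ArtinGroup Γ} {a b : V} (h : Γ.graph.Adj a b) :
    F.locMap g (artinDelta Γ a b) = artinDelta Γ (F.vmap g a) (F.vmap g b) := by
  have h1 := (F.isFirst_step_iff g _ _).2 (isFirst_delta h).1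
  have h1' := (F.isFirst_step_iff g _ _).2 (isFirst_delta h).2
  have h2 : ∀ v, F.step g (v, true) = (F.vmap g v, true) := fun v => Prod.ext rfl (hpos g _)
  rw [h2] at h1 h1'
  refine hgood.delta ((F.adj_vmap hgood).2 h) h1 h1' ?_
  rw [F.locMap_len, F.label_vmap hgood h]
  exact artinLen_altProd _ _ _

omit hpos in
/-- A proper subword of `Δ` has only one first letter. -/
theorem _root_.GoodLen.eq_of_isFirst_altProd {n : ℕ} {c d z : V} (hadj : Γ.graph.Adj c d)
    (hn : n < Γ.label c d) (hn0 : n ≠ 0)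
    (h : IsFirst Γ (z, true) (altProd n (artinGen Γ c) (artinGen Γ d))) : z = c := by
  have h1 := isFirst_altProd (Γ := Γ) hn0 c d
  have h2 : z = c ∨ z = d := hgood.parabolic (altProd_mem n c d) h
  rcases h2 with h2 | rfl
  · exact h2
  · have h3 := hgood.label_le h1 h fun h4 => hadj.ne (congrArg Prod.fst h4)
    rw [artinLen_altProd] at h3
    exact absurd hn (not_lt.mpr h3)

theorem locMap_altProd {g : ArtinGroup Γ} {a b : V} (h : Γ.graph.Adj a b) {k : ℕ}
    (hk : k ≤ Γ.label a b) :
    F.locMap g (altProd k (artinGen Γ a) (artinGen Γ b)) =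
      altProd k (artinGen Γ (F.vmap g a)) (artinGen Γ (F.vmap g b)) := by
  induction k with
  | zero => exact F.locMap_one g
  | succ k ih =>
    rcases Nat.eq_zero_or_pos k with rfl | hk0
    · simpa [altProd] using F.locMap_gen hpos g a
    · have ih' := ih (by omega)
      obtain ⟨l, hl⟩ : ∃ l, Γ.label a b = k + (l + 1) := ⟨Γ.label a b - (k + 1), by omega⟩
      obtain ⟨c, d, hcd, hcd'⟩ : ∃ c d, (c = (if k.bodd then b else a)) ∧
          d = (if k.bodd then a else b) := ⟨_, _, rfl, rfl⟩
      have hc : ∀ v w : V, (if k.bodd then artinGen Γ w else artinGen Γ v) =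
          artinGen Γ (if k.bodd then w else v) := by
        intro v w
        split_ifs <;> rfl
      have hmap : ∀ v w : V, (if k.bodd then F.vmap g w else F.vmap g v) =
          F.vmap g (if k.bodd then w else v) := by
        intro v w
        split_ifs <;> rfl
      have hadj : Γ.graph.Adj c d ∧ Γ.label c d = Γ.label a b := by
        rw [hcd, hcd']
        split_ifs
        · exact ⟨h.symm, Γ.label_symm b a⟩
        · exact ⟨h, rfl⟩
      have hd : artinDelta Γ a b = altProd k (artinGen Γ a) (artinGen Γ b) *
          altProd (l + 1) (artinGen Γ c) (artinGen Γ d) := by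
        rw [artinDelta, hl, altProd_add, hc, hcd, hcd']
        split_ifs <;> rfl
      have hd' : artinDelta Γ (F.vmap g a) (F.vmap g b) =
          altProd k (artinGen Γ (F.vmap g a)) (artinGen Γ (F.vmap g b)) *
          altProd (l + 1) (artinGen Γ (F.vmap g c)) (artinGen Γ (F.vmap g d)) := by
        rw [artinDelta, F.label_vmap hgood h, hl, altProd_add, hc, hmap, hcd, hcd']
        split_ifs <;> rfl
      rw [altProd_succ_right, altProd_succ_right, hc, hc, hmap, ← hcd, F.locMap_mul, ih',
        F.locMap_gen hpos]
      congr 2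
      refine hgood.eq_of_isFirst_altProd (n := l + 1) (d := F.vmap g d)
        ((F.adj_vmap hgood).2 hadj.1) ?_ (by omega) ?_
      · rw [F.label_vmap hgood hadj.1]
        omega
      · unfold IsFirst
        have h1 := F.locMap_len_inv_mul g
          (altProd k (artinGen Γ a) (artinGen Γ b) * artinGen Γ c) (artinDelta Γ a b)
        rw [F.locMap_delta hgood hpos h, F.locMap_mul, ih', F.locMap_gen hpos, hd, hd', mul_inv_rev,
          mul_inv_rev, mul_assoc, mul_assoc, inv_mul_cancel_left, inv_mul_cancel_left] at h1
        rw [artinLen_altProd, artinLetter_true, h1, altProd, inv_mul_cancel_left,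
          artinLen_altProd]
        omega

variable (hlarge : ∀ ⦃a b⦄, Γ.graph.Adj a b → 3 ≤ Γ.label a b)
include hlarge

theorem vmap_gen_of_adj {g : ArtinGroup Γ} {a b : V} (h : Γ.graph.Adj a b) :
    F.vmap (g * artinGen Γ a) b = F.vmap g b := by
  have h1 := F.locMap_altProd hgood hpos h (g := g) (k := 2) (by have := hlarge h; omega)
  simp only [altProd, mul_one] at h1
  rw [F.locMap_mul, F.locMap_gen hpos, F.locMap_gen hpos] at h1
  have h2 := artinLetter_injective hgood (a₁ := (F.vmap (g * artinGen Γ a) b, true))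
    (a₂ := (F.vmap g b, true)) (mul_left_cancel h1)
  exact (Prod.mk.inj h2).1

theorem vmap_gen_gen_of_adj {g : ArtinGroup Γ} {a b : V} (h : Γ.graph.Adj a b) :
    F.vmap (g * artinGen Γ a * artinGen Γ b) a = F.vmap g a := by
  have h1 := F.locMap_altProd hgood hpos h (g := g) (k := 3) (hlarge h)
  simp only [altProd, mul_one] at h1
  rw [F.locMap_mul, F.locMap_mul, F.locMap_gen hpos, F.locMap_gen hpos, F.locMap_gen hpos,
    F.vmap_gen_of_adj hgood hpos hlarge h, mul_assoc] at h1
  rw [← mul_assoc g] at h1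
  have h2 := artinLetter_injective hgood
    (a₁ := (F.vmap (g * artinGen Γ a * artinGen Γ b) a, true)) (a₂ := (F.vmap g a, true))
    (mul_left_cancel (mul_left_cancel h1))
  exact (Prod.mk.inj h2).1

theorem vmap_gen_self {g : ArtinGroup Γ} {a b : V} (h : Γ.graph.Adj a b) :
    F.vmap (g * artinGen Γ a) a = F.vmap g a := by
  exact (F.vmap_gen_of_adj hgood hpos hlarge h.symm).symm.trans
    (F.vmap_gen_gen_of_adj hgood hpos hlarge h)

end ArtinIsom

/-- The composite of an isomorphism of labeled graphs with the inverse of another one. -/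
def LabeledGraphIso.transSymm (α β : LabeledGraphIso Γ Γ) : LabeledGraphIso Γ Γ where
  toEquiv := α.toEquiv.trans β.toEquiv.symm
  adj_iff a b := by
    rw [← β.adj_iff]
    simp [α.adj_iff]
  label_eq a b h := by
    have h1 : Γ.graph.Adj (β.toEquiv.symm (α.toEquiv a)) (β.toEquiv.symm (α.toEquiv b)) := by
      rw [← β.adj_iff]
      simpa [α.adj_iff] using h
    rw [← α.label_eq h]
    have := β.label_eq h1
    simpa using this.symm

namespace ArtinIsom

variable [Finite V] (F : ArtinIsom Γ) (hgood : GoodLen Γ) (hpos : ∀ g x, (F.step g x).2 = x.2)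

/-- The graph automorphism given by the action of an isometry on positive letters. -/
noncomputable def viso (g : ArtinGroup Γ) : LabeledGraphIso Γ Γ where
  toEquiv := Equiv.ofBijective (F.vmap g)
    (Finite.injective_iff_bijective.1 (F.vmap_injective hgood hpos g))
  adj_iff _ _ := F.adj_vmap hgood
  label_eq _ _ h := F.label_vmap hgood h

variable (hlarge : ∀ ⦃a b⦄, Γ.graph.Adj a b → 3 ≤ Γ.label a b) (hconn : Γ.graph.Connected)
  [Nontrivial V]
  (hrigid : ∀ α : LabeledGraphIso Γ Γ,
    (∃ v : V, α.toEquiv v = v ∧ ∀ w : V, Γ.graph.Adj v w → α.toEquiv w = w) →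
      α.toEquiv = Equiv.refl V)
include hgood hpos hlarge hconn hrigid

theorem vmap_mul_gen (g : ArtinGroup Γ) (a : V) : F.vmap (g * artinGen Γ a) = F.vmap g := by
  obtain ⟨b, hb⟩ := hconn.preconnected.exists_adj_of_nontrivial a
  have key : ∀ w, F.vmap (g * artinGen Γ a) w = F.vmap g w →
      ((F.viso hgood hpos (g * artinGen Γ a)).transSymm (F.viso hgood hpos g)).toEquiv w = w := by
    intro w hw
    change (F.viso hgood hpos g).toEquiv.symm (F.vmap (g * artinGen Γ a) w) = w
    rw [Equiv.symm_apply_eq, hw]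
    rfl
  have h1 := hrigid ((F.viso hgood hpos (g * artinGen Γ a)).transSymm (F.viso hgood hpos g))
    ⟨a, key a (F.vmap_gen_self hgood hpos hlarge hb),
      fun w hw => key w (F.vmap_gen_of_adj hgood hpos hlarge hw)⟩
  funext w
  have h2 : (F.viso hgood hpos g).toEquiv.symm (F.vmap (g * artinGen Γ a) w) = w :=
    Equiv.ext_iff.1 h1 w
  rw [Equiv.symm_apply_eq] at h2
  exact h2

theorem vmap_mul (g h : ArtinGroup Γ) : F.vmap (h * g) = F.vmap h := by
  induction g using artin_induction Γ generalizing h with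
  | one => simp
  | mul x g ih =>
    rw [← mul_assoc, ih]
    obtain ⟨a, ε⟩ := x
    cases ε
    · have := F.vmap_mul_gen hgood hpos hlarge hconn hrigid (h * (artinGen Γ a)⁻¹) a
      rw [inv_mul_cancel_right] at this
      rw [artinLetter_false, this]
    · exact F.vmap_mul_gen hgood hpos hlarge hconn hrigid h a

theorem toFun_eq (ψ : ArtinGroup Γ →* ArtinGroup Γ)
    (hψ : ∀ v, ψ (artinGen Γ v) = artinGen Γ (F.vmap 1 v)) (g h : ArtinGroup Γ) :
    F.toFun (h * g) = F.toFun h * ψ g := by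
  have hgen : ∀ h v, F.toFun (h * artinGen Γ v) = F.toFun h * artinGen Γ (F.vmap 1 v) := by
    intro h v
    rw [toFun_mul, F.locMap_gen hpos, ← F.vmap_mul hgood hpos hlarge hconn hrigid h 1, one_mul]
  induction g using artin_induction Γ generalizing h with
  | one => simp
  | mul x g ih =>
    rw [← mul_assoc, ih, map_mul, ← mul_assoc]
    congr 1
    obtain ⟨a, ε⟩ := x
    cases ε
    · have := hgen (h * (artinGen Γ a)⁻¹) a
      rw [inv_mul_cancel_right] at this
      rw [artinLetter_false, map_inv, hψ, this, mul_inv_cancel_right]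
    · rw [artinLetter_true, hψ, hgen]

end ArtinIsom

end Positive

section Deduction

variable {V : Type*} {Γ : LabeledGraph V}

namespace LabeledGraphIso

/-- The inverse of an isomorphism of labeled graphs. -/
def inverse {V' : Type*} {Γ' : LabeledGraph V'} (α : LabeledGraphIso Γ Γ') :
    LabeledGraphIso Γ' Γ where
  toEquiv := α.toEquiv.symm
  adj_iff a b := by simp [← α.adj_iff]
  label_eq a b h := by
    have := α.label_eq (a := α.toEquiv.symm a) (b := α.toEquiv.symm b) (by simpa [← α.adj_iff])
    simpa using this.symm

/-- The homomorphism of Artin groups induced by an isomorphism of labeled graphs. -/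
def artinMap {V' : Type*} {Γ' : LabeledGraph V'} (α : LabeledGraphIso Γ Γ') :
    ArtinGroup Γ →* ArtinGroup Γ' :=
  artinLift Γ (fun v => artinGen Γ' (α.toEquiv v)) fun a b h => by
    rw [← α.label_eq h]
    exact artin_relation Γ' ((α.adj_iff a b).2 h)

@[simp]
theorem artinMap_gen {V' : Type*} {Γ' : LabeledGraph V'} (α : LabeledGraphIso Γ Γ') (v : V) :
    α.artinMap (artinGen Γ v) = artinGen Γ' (α.toEquiv v) := by
  simp [artinMap]

/-- The automorphism of an Artin group induced by an automorphism of its labeled graph. -/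
def artinAut (α : LabeledGraphIso Γ Γ) : MulAut (ArtinGroup Γ) :=
  MonoidHom.toMulEquiv α.artinMap α.inverse.artinMap
    (artin_hom_ext Γ fun v => by simp [inverse]) (artin_hom_ext Γ fun v => by simp [inverse])

theorem artinAut_gen (α : LabeledGraphIso Γ Γ) (v : V) :
    α.artinAut (artinGen Γ v) = artinGen Γ (α.toEquiv v) :=
  α.artinMap_gen v

theorem artinLen_artinMap_le {V' : Type*} {Γ' : LabeledGraph V'} (α : LabeledGraphIso Γ Γ')
    (g : ArtinGroup Γ) : artinLen Γ' (α.artinMap g) ≤ artinLen Γ g :=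
  artinLen_map_le Γ _ (fun x => (α.toEquiv x.1, x.2)) (fun x => by
    obtain ⟨v, _ | _⟩ := x <;> simp) g

theorem artinLen_artinAut (α : LabeledGraphIso Γ Γ) (g : ArtinGroup Γ) :
    artinLen Γ (α.artinAut g) = artinLen Γ g := by
  refine le_antisymm (α.artinLen_artinMap_le g) ?_
  conv_lhs => rw [← α.artinAut.symm_apply_apply g]
  exact α.inverse.artinLen_artinMap_le _

end LabeledGraphIso

theorem artinInv_mem : artinInv Γ ∈ specialAutGroup Γ :=
  Subgroup.subset_closure (Or.inl (artinInvHom_gen Γ))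

theorem LabeledGraphIso.artinAut_mem (α : LabeledGraphIso Γ Γ) :
    α.artinAut ∈ specialAutGroup Γ :=
  Subgroup.subset_closure (Or.inr ⟨α, α.artinAut_gen⟩)

theorem mulAut_ext_gen {φ ψ : MulAut (ArtinGroup Γ)}
    (h : ∀ v, φ (artinGen Γ v) = ψ (artinGen Γ v)) : φ = ψ :=
  MulEquiv.toMonoidHom_injective (artin_hom_ext Γ h)

theorem artinLen_of_mem_specialAutGroup {ψ : MulAut (ArtinGroup Γ)}
    (hψ : ψ ∈ specialAutGroup Γ) (g : ArtinGroup Γ) : artinLen Γ (ψ g) = artinLen Γ g := by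
  induction hψ using Subgroup.closure_induction generalizing g with
  | mem ψ h =>
    rcases h with h | ⟨α, h⟩
    · rw [mulAut_ext_gen (ψ := artinInv Γ) fun v => (h v).trans (artinInvHom_gen Γ v).symm]
      exact artinLen_invHom Γ g
    · rw [mulAut_ext_gen fun v => (h v).trans (α.artinAut_gen v).symm]
      exact α.artinLen_artinAut g
  | one => rfl
  | mul φ ψ _ _ h1 h2 => rw [MulAut.mul_apply, h1, h2]
  | inv ψ _ h =>
    rw [← h, MulAut.apply_inv_self]

theorem bijective_and_isometry_of_mem (g : ArtinGroup Γ) {ψ : MulAut (ArtinGroup Γ)}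
    (hψ : ψ ∈ specialAutGroup Γ) :
    Function.Bijective (fun x => g * ψ x) ∧
      IsIsometryOf (artinDist Γ) (fun x => g * ψ x) := by
  refine ⟨(Group.mulLeft_bijective g).comp ψ.bijective, fun x y => ?_⟩
  rw [artinDist_eq, artinDist_eq, mul_inv_rev, mul_assoc, inv_mul_cancel_left, ← map_inv,
    ← map_mul, artinLen_of_mem_specialAutGroup hψ]

namespace ArtinIsom

variable (F : ArtinIsom Γ)

/-- An isometry followed by the global inversion. -/
def invert : ArtinIsom Γ where
  toFun g := artinInvHom Γ (F.toFun g)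
  bijective := (artinInv Γ).bijective.comp F.bijective
  len_eq g h := by rw [← map_inv, ← map_mul, artinLen_invHom, F.len_eq]

theorem step_invert (hgood : GoodLen Γ) (g : ArtinGroup Γ) (x : V × Bool) :
    F.invert.step g x = ((F.step g x).1, !(F.step g x).2) := by
  apply artinLetter_injective hgood
  rw [← F.invert.locMap_letter, ← artinInvHom_letter, ← F.locMap_letter, locMap, locMap, map_mul,
    map_inv]
  rfl

variable [Finite V] [Nontrivial V] (hgood : GoodLen Γ)
  (hlarge : ∀ ⦃a b⦄, Γ.graph.Adj a b → 3 ≤ Γ.label a b) (hconn : Γ.graph.Connected)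
  (hrigid : ∀ α : LabeledGraphIso Γ Γ,
    (∃ v : V, α.toEquiv v = v ∧ ∀ w : V, Γ.graph.Adj v w → α.toEquiv w = w) →
      α.toEquiv = Equiv.refl V)
include hgood hlarge hconn hrigid

theorem toFun_eq_artinAut (hpos : ∀ g x, (F.step g x).2 = x.2) (g : ArtinGroup Γ) :
    F.toFun g = F.toFun 1 * (F.viso hgood hpos 1).artinAut g := by
  have h := F.toFun_eq hgood hpos hlarge hconn hrigid (F.viso hgood hpos 1).artinMap
    (fun v => LabeledGraphIso.artinMap_gen _ v) g 1
  rwa [one_mul] at h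

theorem exists_specialAut :
    ∃ ψ ∈ specialAutGroup Γ, ∀ g, F.toFun g = F.toFun 1 * ψ g := by
  obtain ⟨s, hs⟩ := F.exists_uniform_sign hgood hlarge hconn
  cases s
  · have hpos : ∀ g x, (F.step g x).2 = x.2 := fun g x => by simpa using hs g x
    exact ⟨_, (F.viso hgood hpos 1).artinAut_mem,
      F.toFun_eq_artinAut hgood hlarge hconn hrigid hpos⟩
  · have hpos : ∀ g x, (F.invert.step g x).2 = x.2 := fun g x => by
      rw [F.step_invert hgood, hs]
      simp
    refine ⟨artinInv Γ * (F.invert.viso hgood hpos 1).artinAut,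
      mul_mem artinInv_mem (LabeledGraphIso.artinAut_mem _), fun g => ?_⟩
    have h := congrArg (artinInvHom Γ)
      (F.invert.toFun_eq_artinAut hgood hlarge hconn hrigid hpos g)
    rw [map_mul] at h
    simp only [invert, artinInvHom_invHom] at h
    exact h

end ArtinIsom

end Deduction

/-- Under the strong rigidity conditions, every bijective isometry
`f` of `(A_Γ, d)` factors uniquely as `f(x) = g · ψ(x)` with `g ∈ A_Γ` and `ψ ∈ N`,
and conversely every such map is a bijective isometry; hence
`Isom(A_Γ, d) ≅ A_Γ ⋊ N`. -/
theorem isometry_group_is_semidirect_product {V : Type*} [Finite V]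
    (Γ : LabeledGraph V)
    (htf : Γ.graph.CliqueFree 3)
    (hlarge : ∀ ⦃a b⦄, Γ.graph.Adj a b → 3 ≤ Γ.label a b)
    (hconn : Γ.graph.Connected) (hcard : 3 ≤ Nat.card V)
    (hsep : ¬ Γ.HasSeparatingVertexOrEdge)
    (hrigid : ∀ α : LabeledGraphIso Γ Γ,
      (∃ v : V, α.toEquiv v = v ∧ ∀ w : V, Γ.graph.Adj v w → α.toEquiv w = w) →
        α.toEquiv = Equiv.refl V) :
    (∀ f : ArtinGroup Γ → ArtinGroup Γ,
        Function.Bijective f → IsIsometryOf (artinDist Γ) f →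
          ∃! p : ArtinGroup Γ × ↥(specialAutGroup Γ),
            ∀ x, f x = p.1 * (p.2 : MulAut (ArtinGroup Γ)) x) ∧
      ∀ (g : ArtinGroup Γ) (ψ : ↥(specialAutGroup Γ)),
        Function.Bijective (fun x => g * (ψ : MulAut (ArtinGroup Γ)) x) ∧
          IsIsometryOf (artinDist Γ) (fun x => g * (ψ : MulAut (ArtinGroup Γ)) x) := by
  have : Nontrivial V := Finite.one_lt_card_iff_nontrivial.1 (by omega)
  have htri : ∀ a b c, Γ.graph.Adj a b → Γ.graph.Adj b c → ¬ Γ.graph.Adj a c := by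
    classical
    intro a b c hab hbc hac
    exact htf {a, b, c} (SimpleGraph.is3Clique_triple_iff.2 ⟨hab, hac, hbc⟩)
  have hgood := goodLen_of_triangleFree Γ htri hlarge
  refine ⟨fun f hf hiso => ?_, fun g ψ => bijective_and_isometry_of_mem g ψ.2⟩
  let F : ArtinIsom Γ := ⟨f, hf, fun g h => by
    have := hiso g h
    rw [artinDist_eq, artinDist_eq] at this
    exact_mod_cast this⟩
  obtain ⟨ψ, hψ, h⟩ := F.exists_specialAut hgood hlarge hconn hrigid
  refine ⟨(f 1, ⟨ψ, hψ⟩), h, ?_⟩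
  rintro ⟨g, φ, hφ⟩ h'
  have h1 : g = f 1 := by simpa using (h' 1).symm
  subst h1
  refine Prod.ext rfl (Subtype.ext (MulEquiv.ext fun x => ?_))
  exact mul_left_cancel ((h' x).symm.trans (h x))
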